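/- For every ε ∈ (0, 0.1], every real σ ∈ (0, 1/(2H)], and all integers n ≥ 1, K ≥ 1, A ≥ 3, and H ≥ 4n, there exists a finite family ℳ of finite episodic POMDPs with horizon H such that: (1) every M ∈ ℳ has |𝒮| = 2ⁿ + 1 latent states, |𝒪| = 2ⁿ + 2K + 1 observations, and |𝒜| = A actions; (2) every M ∈ ℳ is single-step (m = 1) α-revealing with α = σ/(σ + 2); (3) |ℳ| ≤ 2^K · A^H · (2ⁿ+1) · A · H; and (4) for every T ∈ ℕ and every T-episode algorithm 𝔄 whose output satisfies ℙ_M^𝔄( V_M⋆ − V_M(π^out) < ε/8 ) ≥ 3/4 for every M ∈ ℳ, one must have T ≥ (1/20000) · min{ 2^{n−1}·K^{1/2}·A·H/(σ²ε²), 2^{n−1}·A^{H/2}·H/ε² }. -/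

import Mathlib

/-!
The family consists of combination locks behind a binary tree.  The `2 ^ n - 1` tree states are fully
observed and move deterministically; leaving the tree leads to the absorbing state `minus`, except
that one secret arm (step, leaf, action) leads to `plus` with probability `ε`.  The state stays at
`plus` only while a secret password is played.  Before the last step `minus` emits one of `2K`
symbols uniformly, and `plus` emits them with a tilt of size `σ` in the direction of hidden signs
`μ ∈ {±1}^K`; at the last step the tilt is total and public, and the reward is
`1` or `0` according to the public sign.
The tilt makes the emission matrices injective, with an explicit left inverse of norm at most
`(σ + 2) / σ` (`Env.revealing`).

The lower bound compares every instance with the reference law in which the secret arm leads to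
`minus`.  Transitions being otherwise deterministic, the law of an episode is the reference law times
`1 - ε + ε · lr` (`Env.trajProb_eq`).  For two sign vectors and the same lock, the mixed second
moment of these ratios exceeds `1` by at most `3 ε²` times (`σ² |corr μ μ'|` × expected time spent at
`plus` before the last step + probability of being there at the last step) (`Env.sum_elr_elr`).
Averaging over `μ`, `corr` has size `1 / √K`, so the mixture over `μ` stays close to the reference in
chi-square as long as a total information budget is not exceeded.  As the algorithm is adaptive, its
expenditure is random; episodes that would exceed the budget are dropped from the likelihood
ratios, and the probability of overspending is bounded by Markov's inequality under the reference law
(`mixture_le`, `Env.success_le`).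

Under the reference law the algorithm learns nothing about the secret.  An episode pulls at most one
arm, and each further password letter is right for a fraction `1 / A` of the passwords, so
summed over all arms and averaged over passwords the occupation of `plus` is at most `3 / 2` before
the last step and about `A ^ (-H / 2)` at the last step (`Env.sum_arms_ecost`).  The same count bounds
how often the output policy is `ε / 8`-optimal, since such a policy must reach `plus` at the last step
(`Env.ecost_of_accurate`).  Dividing by the number of arms, which is at least `2 ^ (n - 1) A H / 6`,
gives the claim (`Env.family_bound`, `bound_of_counting`).
-/

open Finset

noncomputable section

/-- A finite episodic POMDP with horizon `H`, latent state space `S`, observation space `O`,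
action space `A`.  Steps are indexed by `1, …, H` (paper convention). -/
structure POMDP (S O A : Type) [Fintype S] [Fintype O] [Fintype A] (H : ℕ) where
  init : S → ℝ
  init_nonneg : ∀ s, 0 ≤ init s
  init_sum : ∑ s, init s = 1
  trans : ℕ → S → A → S → ℝ
  trans_nonneg : ∀ h s a s', 0 ≤ trans h s a s'
  trans_sum : ∀ h s a, ∑ s', trans h s a s' = 1
  emit : ℕ → S → O → ℝ
  emit_nonneg : ∀ h s o, 0 ≤ emit h s o
  emit_sum : ∀ h s, ∑ o, emit h s o = 1
  reward : ℕ → O → A → ℝ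
  reward_nonneg : ∀ h o a, 0 ≤ reward h o a
  reward_le_one : ∀ h o a, reward h o a ≤ 1
  reward_total : ∀ τ : Fin H → O × A, ∑ h : Fin H, reward (h.1 + 1) (τ h).1 (τ h).2 ≤ 1

namespace POMDP

variable {S O A : Type} [Fintype S] [Fintype O] [Fintype A] {H : ℕ}

/-- `emitActProb M m h s ω a` is the probability `ℙ_M(o_{h:h+m−1} = ω | s_h = s,
a_{h:h+m−2} = a)` of observing the sequence `ω ∈ 𝒪^m` when the latent state at (1-based)
step `h` is `s` and the action sequence `a ∈ 𝒜^{m−1}` is executed. -/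
def emitActProb (M : POMDP S O A H) : (m : ℕ) → ℕ → S → (Fin m → O) → (Fin (m - 1) → A) → ℝ
  | 0, _, _, _, _ => 1
  | 1, h, s, ω, _ => M.emit h s (ω 0)
  | m + 2, h, s, ω, a =>
    M.emit h s (ω 0) *
      ∑ s' : S, M.trans h s (a ⟨0, Nat.succ_pos m⟩) s' *
        emitActProb M (m + 1) (h + 1) s' (fun i => ω i.succ) (fun i => a i.succ)

/-- The `m`-step emission–action matrix `𝕄_{h,m}` (`h` is the 1-based step index). -/
def emitActMatrix (M : POMDP S O A H) (h m : ℕ) :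
    Matrix ((Fin m → O) × (Fin (m - 1) → A)) S ℝ :=
  Matrix.of fun p s => M.emitActProb m h s p.1 p.2

/-- The set of columns of the step-(h−1) transition matrix `𝕋_{h−1}`
(the single column `μ₁` when `h = 1`). -/
def stepCols (M : POMDP S O A H) (h : ℕ) : Set (S → ℝ) :=
  if h = 1 then {fun s => M.init s}
  else {c | ∃ s' a', c = fun s => M.trans (h - 1) s' a' s}

/-- `B` is a generalized left inverse of `𝕄_{h,m}`, i.e. `B · 𝕄_{h,m} · 𝕋_{h−1} = 𝕋_{h−1}`. -/
def IsGenLeftInv (M : POMDP S O A H) (h m : ℕ)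
    (B : Matrix S ((Fin m → O) × (Fin (m - 1) → A)) ℝ) : Prop :=
  ∀ c ∈ M.stepCols h, (B * M.emitActMatrix h m).mulVec c = c

end POMDP

/-- The star-norm `‖x‖_* = (Σ_a (Σ_ω |x(ω,a)|)²)^{1/2}`. -/
def starNorm {ι κ : Type} [Fintype ι] [Fintype κ] (x : ι × κ → ℝ) : ℝ :=
  Real.sqrt (∑ a : κ, (∑ ω : ι, |x (ω, a)|) ^ 2)

/-- The `(*→1)`-operator norm `‖B‖_{*→1} = max_{‖x‖_* ≤ 1} ‖Bx‖₁`. -/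
def opNormStarOne {S ι κ : Type} [Fintype S] [Fintype ι] [Fintype κ]
    (B : Matrix S (ι × κ) ℝ) : ℝ :=
  sSup {y | ∃ x : ι × κ → ℝ, starNorm x ≤ 1 ∧ y = ∑ s, |B.mulVec x s|}

/-- The `(1→1)`-operator norm `‖B‖_{1→1} = max_{‖y‖₁ ≤ 1} ‖By‖₁`. -/
def opNormOneOne {ι₁ ι₂ : Type} [Fintype ι₁] [Fintype ι₂] (B : Matrix ι₁ ι₂ ℝ) : ℝ :=
  sSup {y | ∃ v : ι₂ → ℝ, (∑ i, |v i|) ≤ 1 ∧ y = ∑ j, |B.mulVec v j|}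

namespace POMDP
variable {S O A : Type} [Fintype S] [Fintype O] [Fintype A] {H : ℕ}

/-- `M` is `m`-step `α`-revealing. -/
def IsRevealing (M : POMDP S O A H) (m : ℕ) (α : ℝ) : Prop :=
  ∀ h ∈ Finset.Icc 1 (H - m + 1),
    ∃ B : Matrix S ((Fin m → O) × (Fin (m - 1) → A)) ℝ,
      M.IsGenLeftInv h m B ∧ opNormStarOne B ≤ 1 / α

end POMDP

/-- A history-dependent policy: a distribution over actions for every (history, observation). -/
structure Policy (O A : Type) [Fintype A] where
  act : List (O × A) → O → A → ℝ
  act_nonneg : ∀ τ o a, 0 ≤ act τ o a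
  act_sum : ∀ τ o, ∑ a, act τ o a = 1

namespace POMDP
variable {S O A : Type} [Fintype S] [Fintype O] [Fintype A] {H : ℕ}

/-- The probability `ℙ_M^π(τ)` of a full trajectory `τ = (o_1,a_1,…,o_H,a_H)`. -/
def trajProb (M : POMDP S O A H) (π : Policy O A) (τ : Fin H → O × A) : ℝ :=
  ∑ s : Fin H → S, ∏ h : Fin H,
    (if h.1 = 0 then M.init (s h)
     else
       M.trans h.1 (s ⟨h.1 - 1, Nat.lt_of_le_of_lt (Nat.sub_le _ _) h.2⟩)
         (τ ⟨h.1 - 1, Nat.lt_of_le_of_lt (Nat.sub_le _ _) h.2⟩).2 (s h)) *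
    M.emit (h.1 + 1) (s h) (τ h).1 *
    π.act ((List.ofFn τ).take h.1) (τ h).1 (τ h).2

/-- The value `V_M(π)` of a policy. -/
def value (M : POMDP S O A H) (π : Policy O A) : ℝ :=
  ∑ τ : Fin H → O × A, M.trajProb π τ * ∑ h : Fin H, M.reward (h.1 + 1) (τ h).1 (τ h).2

/-- The optimal value `V_M⋆`. -/
def optValue (M : POMDP S O A H) : ℝ := ⨆ π : Policy O A, M.value π

end POMDP

/-- A `T`-episode algorithm: a distribution over actions for every
(past episodes, within-episode history, current observation), and an output policy map. -/
structure Algorithm (O A : Type) [Fintype A] (H : ℕ) where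
  act : List (Fin H → O × A) → List (O × A) → O → A → ℝ
  act_nonneg : ∀ past hist o a, 0 ≤ act past hist o a
  act_sum : ∀ past hist o, ∑ a, act past hist o a = 1
  out : List (Fin H → O × A) → Policy O A

/-- The policy executed by algorithm `𝔄` in the episode following the past episodes `past`. -/
def Algorithm.policyAt {O A : Type} [Fintype A] {H : ℕ} (𝔄 : Algorithm O A H)
    (past : List (Fin H → O × A)) : Policy O A :=
  ⟨fun hist o a => 𝔄.act past hist o a, fun _ _ _ => 𝔄.act_nonneg _ _ _ _,
    fun _ _ => 𝔄.act_sum _ _ _⟩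

namespace POMDP
variable {S O A : Type} [Fintype S] [Fintype O] [Fintype A] {H : ℕ}

/-- The law `ℙ_M^𝔄` of the transcript `(τ^{(1)},…,τ^{(T)})`. -/
def transcriptProb (M : POMDP S O A H) (𝔄 : Algorithm O A H) {T : ℕ}
    (τs : Fin T → Fin H → O × A) : ℝ :=
  ∏ t : Fin T, M.trajProb (𝔄.policyAt ((List.ofFn τs).take t.1)) (τs t)

open Classical in
/-- `ℙ_M^𝔄(V_M⋆ − V_M(π^out) < ε)`. -/
def pacProb (M : POMDP S O A H) (𝔄 : Algorithm O A H) (T : ℕ) (ε : ℝ) : ℝ :=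
  ∑ τs : Fin T → Fin H → O × A,
    if M.optValue - M.value (𝔄.out (List.ofFn τs)) < ε then M.transcriptProb 𝔄 τs else 0

/-- The expected regret `E_M^𝔄[Σ_{t=1}^T (V_M⋆ − V_M(π^{(t)}))]`. -/
def expRegret (M : POMDP S O A H) (𝔄 : Algorithm O A H) (T : ℕ) : ℝ :=
  ∑ τs : Fin T → Fin H → O × A,
    M.transcriptProb 𝔄 τs *
      ∑ t : Fin T, (M.optValue - M.value (𝔄.policyAt ((List.ofFn τs).take t.1)))

end POMDP

namespace HardFamily

/-! ### Sequentially generated lists and supermartingales -/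

section Sequences

variable {X β : Type}

/-- The product weight of a finite sequence whose next symbol is drawn from the kernel `w` given
the list of all previous symbols.  Episodes and transcripts are both of this form. -/
def seqProb (w : List X → X → ℝ) {N : ℕ} (τ : Fin N → X) : ℝ :=
  ∏ h : Fin N, w ((List.ofFn τ).take h.1) (τ h)

/-- Auxiliary recursion for `acc`, running over the reversed list. -/
def accRev (b : β) (step : List X → β → X → β) : List X → β
  | [] => b
  | x :: r => step r.reverse (accRev b step r) x

/-- A quantity updated along a list, the update depending on the whole prefix read so far. -/
def acc (b : β) (step : List X → β → X → β) (l : List X) : β := accRev b step l.reverse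

@[simp] lemma acc_nil (b : β) (step : List X → β → X → β) : acc b step [] = b := rfl

@[simp] lemma acc_snoc (b : β) (step : List X → β → X → β) (l : List X) (x : X) :
    acc b step (l ++ [x]) = step l (acc b step l) x := by
  simp [acc, accRev]

lemma ofFn_snoc {N : ℕ} (τ : Fin N → X) (x : X) :
    List.ofFn (Fin.snoc (α := fun _ => X) τ x) = List.ofFn τ ++ [x] := by
  rw [List.ofFn_succ']
  simp

lemma seqProb_snoc (w : List X → X → ℝ) {N : ℕ} (τ : Fin N → X) (x : X) :
    seqProb w (Fin.snoc (α := fun _ => X) τ x) = seqProb w τ * w (List.ofFn τ) x := by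
  unfold seqProb
  rw [Fin.prod_univ_castSucc, ofFn_snoc]
  congr 1
  · refine Finset.prod_congr rfl fun i _ => ?_
    rw [List.take_append_of_le_length (by simp [i.2.le])]
    simp
  · simp

lemma seqProb_nonneg {w : List X → X → ℝ} (hw : ∀ l x, 0 ≤ w l x) {N : ℕ} (τ : Fin N → X) :
    0 ≤ seqProb w τ := Finset.prod_nonneg fun _ _ => hw _ _

lemma seqProb_mul (w v : List X → X → ℝ) {N : ℕ} (τ : Fin N → X) :
    seqProb (fun l x => w l x * v l x) τ = seqProb w τ * seqProb v τ :=
  Finset.prod_mul_distrib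

/-- A multiplicatively accumulated quantity is the corresponding product over positions. -/
lemma acc_mul_ofFn (φ : List X → X → ℝ) {N : ℕ} (τ : Fin N → X) :
    acc 1 (fun l c x => c * φ l x) (List.ofFn τ) = seqProb φ τ := by
  induction N with
  | zero => simp [seqProb]
  | succ N ih =>
    obtain ⟨σ, x, rfl⟩ : ∃ (σ : Fin N → X) (x : X), τ = Fin.snoc (α := fun _ => X) σ x :=
      ⟨Fin.init τ, τ (Fin.last N), (Fin.snoc_init_self τ).symm⟩
    rw [ofFn_snoc, acc_snoc, ih, seqProb_snoc]

lemma acc_add_ofFn (φ : List X → X → ℝ) {N : ℕ} (τ : Fin N → X) :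
    acc 0 (fun l c x => c + φ l x) (List.ofFn τ) =
      ∑ h : Fin N, φ ((List.ofFn τ).take h.1) (τ h) := by
  induction N with
  | zero => simp
  | succ N ih =>
    obtain ⟨σ, x, rfl⟩ : ∃ (σ : Fin N → X) (x : X), τ = Fin.snoc (α := fun _ => X) σ x :=
      ⟨Fin.init τ, τ (Fin.last N), (Fin.snoc_init_self τ).symm⟩
    rw [Fin.sum_univ_castSucc, ofFn_snoc, acc_snoc, ih]
    congr 1
    · refine Finset.sum_congr rfl fun i _ => ?_
      rw [List.take_append_of_le_length (by simp [i.2.le])]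
      simp
    · simp

variable [Fintype X]

lemma sum_seqProb_succ (w : List X → X → ℝ) (N : ℕ) (Z : List X → ℝ) :
    ∑ τ : Fin (N + 1) → X, seqProb w τ * Z (List.ofFn τ) =
      ∑ τ : Fin N → X, seqProb w τ * ∑ x, w (List.ofFn τ) x * Z (List.ofFn τ ++ [x]) := by
  rw [← (Fin.snocEquiv (fun _ : Fin (N + 1) => X)).sum_comp, Fintype.sum_prod_type,
    Finset.sum_comm]
  refine Finset.sum_congr rfl fun τ _ => ?_
  rw [Finset.mul_sum]
  refine Finset.sum_congr rfl fun x _ => ?_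
  simp only [Fin.snocEquiv, Equiv.coe_fn_mk]
  rw [seqProb_snoc, ofFn_snoc, mul_assoc]

/-- The supermartingale inequality for sequentially generated lists. -/
lemma sum_seqProb_le {w : List X → X → ℝ} (hw : ∀ l x, 0 ≤ w l x) (N : ℕ) (Z : List X → ℝ)
    (hZ : ∀ l, l.length < N → ∑ x, w l x * Z (l ++ [x]) ≤ Z l) :
    ∑ τ : Fin N → X, seqProb w τ * Z (List.ofFn τ) ≤ Z [] := by
  induction N with
  | zero => simp [seqProb]
  | succ N ih =>
    rw [sum_seqProb_succ]
    refine le_trans (Finset.sum_le_sum fun τ _ => ?_) (ih fun l hl => hZ l (by omega))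
    exact mul_le_mul_of_nonneg_left (hZ _ (by simp)) (seqProb_nonneg hw τ)

/-- The submartingale inequality. -/
lemma le_sum_seqProb {w : List X → X → ℝ} (hw : ∀ l x, 0 ≤ w l x) (N : ℕ) (Z : List X → ℝ)
    (hZ : ∀ l, l.length < N → Z l ≤ ∑ x, w l x * Z (l ++ [x])) :
    Z [] ≤ ∑ τ : Fin N → X, seqProb w τ * Z (List.ofFn τ) := by
  have := sum_seqProb_le hw N (fun l => - Z l) (fun l hl => by
    simpa using hZ l hl)
  simpa using this

lemma sum_seqProb_eq_one {w : List X → X → ℝ} (hw : ∀ l x, 0 ≤ w l x) (N : ℕ)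
    (hs : ∀ l, ∑ x, w l x = 1) : ∑ τ : Fin N → X, seqProb w τ = 1 := by
  have h1 := sum_seqProb_le hw N (fun _ => 1) (fun l _ => by simp [hs])
  have h2 := le_sum_seqProb hw N (fun _ => 1) (fun l _ => by simp [hs])
  simp only [mul_one] at h1 h2
  exact le_antisymm h1 h2

end Sequences

/-! ### A change-of-measure inequality with a predictable information budget -/

section Transcripts

variable {X Ω : Type}

/-- The information cost actually charged: a step whose cost `u` would push the total above `1`
is skipped. -/
def spent (u : List X → ℝ) : List X → ℝ :=
  acc 0 fun l c _ => if c + u l ≤ 1 then c + u l else c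

/-- The truncated likelihood ratio: factors of skipped steps are replaced by `1`. -/
def truncLR (u : List X → ℝ) (L : X → ℝ) : List X → ℝ :=
  acc 1 fun l c x => c * if spent u l + u l ≤ 1 then L x else 1

/-- The total cost of a list. -/
def total (u : List X → ℝ) : List X → ℝ := acc 0 fun l c _ => c + u l

lemma spent_le_one (u : List X → ℝ) (l : List X) : spent u l ≤ 1 := by
  induction l using List.reverseRecOn with
  | nil => simp [spent]
  | append_singleton l x ih =>
    simp only [spent, acc_snoc] at ih ⊢
    split_ifs with h <;> assumption

lemma total_nonneg {u : List X → ℝ} (hu : ∀ l, 0 ≤ u l) (l : List X) : 0 ≤ total u l := by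
  induction l using List.reverseRecOn with
  | nil => simp [total]
  | append_singleton l x ih =>
    simp only [total, acc_snoc] at ih ⊢
    linarith [hu l]

/-- Nothing is skipped on lists of total cost at most `1`. -/
lemma truncLR_eq {u : List X → ℝ} (hu : ∀ l, 0 ≤ u l) (L : X → ℝ) (l : List X)
    (hl : total u l ≤ 1) :
    spent u l = total u l ∧ truncLR u L l = acc 1 (fun _ c x => c * L x) l := by
  induction l using List.reverseRecOn with
  | nil => simp [spent, total, truncLR]
  | append_singleton l x ih =>
    have h0 : total u (l ++ [x]) = total u l + u l := by simp [total]
    rw [h0] at hl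
    obtain ⟨h1, h2⟩ := ih (by linarith [hu l])
    have h3 : spent u l + u l ≤ 1 := by rw [h1]; exact hl
    refine ⟨?_, ?_⟩
    · rw [h0, ← h1]
      change acc 0 _ (l ++ [x]) = _
      rw [acc_snoc]
      change (if spent u l + u l ≤ 1 then spent u l + u l else spent u l) = _
      rw [if_pos h3]
    · rw [acc_snoc, ← h2]
      change acc 1 _ (l ++ [x]) = _
      rw [acc_snoc, if_pos h3]
      rfl

lemma truncLR_snoc (u : List X → ℝ) (L : X → ℝ) (l : List X) (x : X) :
    truncLR u L (l ++ [x]) = truncLR u L l * if spent u l + u l ≤ 1 then L x else 1 := by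
  simp [truncLR]

lemma spent_snoc (u : List X → ℝ) (l : List X) (x : X) :
    spent u (l ++ [x]) = if spent u l + u l ≤ 1 then spent u l + u l else spent u l :=
  acc_snoc _ _ _ _

lemma truncLR_nonneg (u : List X → ℝ) {L : X → ℝ} (hL : ∀ x, 0 ≤ L x) (l : List X) :
    0 ≤ truncLR u L l := by
  induction l using List.reverseRecOn with
  | nil => simp [truncLR]
  | append_singleton l x ih =>
    rw [truncLR_snoc]
    split_ifs
    · exact mul_nonneg ih (hL x)
    · simpa using ih

variable [Fintype X] [Fintype Ω]

/-- The truncated likelihood ratio has mean one under the reference law. -/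
lemma sum_truncLR {p : List X → X → ℝ} (hp : ∀ l x, 0 ≤ p l x) (hs : ∀ l, ∑ x, p l x = 1)
    (u : List X → ℝ) (L : X → ℝ) (h1 : ∀ l, ∑ x, p l x * L x = 1) (T : ℕ) :
    ∑ τ : Fin T → X, seqProb p τ * truncLR u L (List.ofFn τ) = 1 := by
  have key : ∀ l, ∑ x, p l x * truncLR u L (l ++ [x]) = truncLR u L l := by
    intro l
    simp only [truncLR_snoc]
    split_ifs
    · calc _ = truncLR u L l * ∑ x, p l x * L x := by
            rw [Finset.mul_sum]; exact Finset.sum_congr rfl fun x _ => by ring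
        _ = _ := by rw [h1, mul_one]
    · rw [← Finset.sum_mul, hs]; ring
  have a := sum_seqProb_le hp T (truncLR u L) (fun l _ => (key l).le)
  have b := le_sum_seqProb hp T (truncLR u L) (fun l _ => (key l).ge)
  exact le_antisymm (by simpa [truncLR] using a) (by simpa [truncLR] using b)

/-- The budget caps the mixed second moment of two truncated likelihood ratios. -/
lemma sum_truncLR_mul_le {p : List X → X → ℝ} (hp : ∀ l x, 0 ≤ p l x)
    (hs : ∀ l, ∑ x, p l x = 1) (u : List X → ℝ) (L L' : X → ℝ)
    (hL : ∀ x, 0 ≤ L x) (hL' : ∀ x, 0 ≤ L' x) {C : ℝ} (hC : 0 ≤ C)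
    (h2 : ∀ l, ∑ x, p l x * (L x * L' x) ≤ Real.exp (u l * C)) (T : ℕ) :
    ∑ τ : Fin T → X, seqProb p τ * (truncLR u L (List.ofFn τ) * truncLR u L' (List.ofFn τ)) ≤
      Real.exp C := by
  set Z : List X → ℝ := fun l =>
    truncLR u L l * truncLR u L' l * Real.exp (C * (1 - spent u l)) with hZ
  have nn : ∀ l, 0 ≤ truncLR u L l * truncLR u L' l := fun l =>
    mul_nonneg (truncLR_nonneg u hL l) (truncLR_nonneg u hL' l)
  have key := sum_seqProb_le hp T Z (fun l _ => by
    simp only [hZ, truncLR_snoc, spent_snoc]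
    split_ifs
    · calc _ = (truncLR u L l * truncLR u L' l * Real.exp (C * (1 - (spent u l + u l)))) *
              ∑ x, p l x * (L x * L' x) := by
            rw [Finset.mul_sum]; exact Finset.sum_congr rfl fun x _ => by ring
        _ ≤ (truncLR u L l * truncLR u L' l * Real.exp (C * (1 - (spent u l + u l)))) *
              Real.exp (u l * C) :=
            mul_le_mul_of_nonneg_left (h2 l) (mul_nonneg (nn l) (Real.exp_pos _).le)
        _ = _ := by
            rw [mul_assoc, ← Real.exp_add]; congr 2; ring
    · simp only [mul_one]
      rw [← Finset.sum_mul, hs, one_mul])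
  have h0 : Z [] = Real.exp C := by simp [hZ, truncLR, spent]
  rw [← h0]
  refine le_trans (Finset.sum_le_sum fun τ _ => ?_) key
  refine mul_le_mul_of_nonneg_left ?_ (seqProb_nonneg hp τ)
  refine le_mul_of_one_le_right (nn _) (Real.one_le_exp ?_)
  exact mul_nonneg hC (by linarith [spent_le_one u (List.ofFn τ)])

open Classical in
/-- Comparison of a mixture of sequential laws with a reference law `p`: the mixture probability
of an event exceeds the reference probability by at most the expected total information cost plus
a chi-square term.  The truncation at budget `1` is what allows an adaptive sampling law. -/
lemma mixture_le {p : List X → X → ℝ} (hp : ∀ l x, 0 ≤ p l x)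
    (hs : ∀ l, ∑ x, p l x = 1) (u : List X → ℝ) (hu : ∀ l, 0 ≤ u l) (L : Ω → X → ℝ)
    (hL : ∀ m x, 0 ≤ L m x) (h1 : ∀ m l, ∑ x, p l x * L m x = 1) (C : Ω → Ω → ℝ)
    (hC : ∀ m m', 0 ≤ C m m')
    (h2 : ∀ m m' l, ∑ x, p l x * (L m x * L m' x) ≤ Real.exp (u l * C m m'))
    (T : ℕ) (Good : List X → Prop) {χ : ℝ}
    (hχ : ∑ m, ∑ m', Real.exp (C m m') ≤ (1 + χ) * (Fintype.card Ω : ℝ) ^ 2)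
    (hΩ : 0 < Fintype.card Ω) :
    ∑ m, ∑ τ : Fin T → X, seqProb (fun l x => p l x * L m x) τ *
        (if Good (List.ofFn τ) then 1 else 0) ≤
      Fintype.card Ω * (∑ τ : Fin T → X, seqProb p τ *
        ((if Good (List.ofFn τ) then 1 else 0) + total u (List.ofFn τ)) + 1 / 8 + 2 * χ) := by
  set F : List X → ℝ := fun l => if Good l ∨ 1 < total u l then 1 else 0 with hF
  have hΩ' : (0 : ℝ) < Fintype.card Ω := by exact_mod_cast hΩ
  have step1 : ∀ m, ∑ τ : Fin T → X, seqProb (fun l x => p l x * L m x) τ *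
        (if Good (List.ofFn τ) then 1 else 0) ≤
      ∑ τ : Fin T → X, seqProb p τ * (truncLR u (L m) (List.ofFn τ) * F (List.ofFn τ)) := by
    intro m
    have e1 : ∑ τ : Fin T → X, seqProb (fun l x => p l x * L m x) τ = 1 :=
      sum_seqProb_eq_one (fun l x => mul_nonneg (hp l x) (hL m x)) T (h1 m)
    have e2 := sum_truncLR hp hs u (L m) (h1 m) T
    have e3 : ∑ τ : Fin T → X, seqProb p τ *
          (truncLR u (L m) (List.ofFn τ) * (1 - F (List.ofFn τ))) ≤
        ∑ τ : Fin T → X, seqProb (fun l x => p l x * L m x) τ *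
          (1 - (if Good (List.ofFn τ) then 1 else 0)) := by
      refine Finset.sum_le_sum fun τ _ => ?_
      have nn : 0 ≤ seqProb (fun l x => p l x * L m x) τ :=
        seqProb_nonneg (fun l x => mul_nonneg (hp l x) (hL m x)) τ
      by_cases hg : Good (List.ofFn τ)
      · simp [hF, hg]
      · by_cases ht : 1 < total u (List.ofFn τ)
        · simpa [hF, hg, ht] using nn
        · have := (truncLR_eq hu (L m) (List.ofFn τ) (not_lt.mp ht)).2
          simp only [hF, hg, ht, or_self, if_false, sub_zero, mul_one]
          rw [this, seqProb_mul, acc_mul_ofFn (fun _ x => L m x)]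
    simp only [mul_sub, mul_one, Finset.sum_sub_distrib] at e3
    linarith
  set D : List X → ℝ := fun l => (∑ m, truncLR u (L m) l) / Fintype.card Ω with hD
  have hDc : ∀ l, ∑ m, truncLR u (L m) l = Fintype.card Ω * D l := fun l => by
    simp only [hD]; field_simp
  have eD : ∑ τ : Fin T → X, seqProb p τ * D (List.ofFn τ) = 1 := by
    have : (Fintype.card Ω : ℝ) * ∑ τ : Fin T → X, seqProb p τ * D (List.ofFn τ) =
        Fintype.card Ω := by
      calc _ = ∑ τ : Fin T → X, ∑ m, seqProb p τ * truncLR u (L m) (List.ofFn τ) := by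
            rw [Finset.mul_sum]
            refine Finset.sum_congr rfl fun τ _ => ?_
            rw [← Finset.mul_sum, hDc]; ring
        _ = ∑ m, ∑ τ : Fin T → X, seqProb p τ * truncLR u (L m) (List.ofFn τ) :=
            Finset.sum_comm
        _ = ∑ m : Ω, (1 : ℝ) :=
            Finset.sum_congr rfl fun m _ => sum_truncLR hp hs u (L m) (h1 m) T
        _ = _ := by simp
    exact mul_left_cancel₀ hΩ'.ne' (by rw [this, mul_one])
  have eD2 : ∑ τ : Fin T → X, seqProb p τ * D (List.ofFn τ) ^ 2 ≤ 1 + χ := by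
    have : (Fintype.card Ω : ℝ) ^ 2 * ∑ τ : Fin T → X, seqProb p τ * D (List.ofFn τ) ^ 2 ≤
        (Fintype.card Ω : ℝ) ^ 2 * (1 + χ) := by
      calc _ = ∑ τ : Fin T → X, ∑ m, ∑ m', seqProb p τ *
                (truncLR u (L m) (List.ofFn τ) * truncLR u (L m') (List.ofFn τ)) := by
            rw [Finset.mul_sum]
            refine Finset.sum_congr rfl fun τ _ => ?_
            simp only [← Finset.mul_sum]
            rw [← Finset.sum_mul, hDc]; ring
        _ = ∑ m, ∑ m', ∑ τ : Fin T → X, seqProb p τ *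
                (truncLR u (L m) (List.ofFn τ) * truncLR u (L m') (List.ofFn τ)) := by
            rw [Finset.sum_comm]
            exact Finset.sum_congr rfl fun m _ => Finset.sum_comm
        _ ≤ ∑ m, ∑ m', Real.exp (C m m') :=
            Finset.sum_le_sum fun m _ => Finset.sum_le_sum fun m' _ =>
              sum_truncLR_mul_le hp hs u (L m) (L m') (hL m) (hL m') (hC m m') (h2 m m') T
        _ ≤ _ := by linarith
    exact le_of_mul_le_mul_left this (by positivity)
  have e1 : ∑ τ : Fin T → X, seqProb p τ = 1 := sum_seqProb_eq_one hp T hs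
  calc _ ≤ ∑ m, ∑ τ : Fin T → X,
          seqProb p τ * (truncLR u (L m) (List.ofFn τ) * F (List.ofFn τ)) :=
        Finset.sum_le_sum fun m _ => step1 m
    _ = Fintype.card Ω * ∑ τ : Fin T → X, seqProb p τ * (D (List.ofFn τ) * F (List.ofFn τ)) := by
        rw [Finset.sum_comm, Finset.mul_sum]
        refine Finset.sum_congr rfl fun τ _ => ?_
        rw [← Finset.mul_sum, ← Finset.sum_mul, hDc]; ring
    _ ≤ Fintype.card Ω * ∑ τ : Fin T → X, (seqProb p τ *
          ((if Good (List.ofFn τ) then 1 else 0) + total u (List.ofFn τ)) +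
          (1 / 8 * seqProb p τ + 2 * (seqProb p τ * D (List.ofFn τ) ^ 2 -
            2 * (seqProb p τ * D (List.ofFn τ)) + seqProb p τ))) := by
        refine mul_le_mul_of_nonneg_left (Finset.sum_le_sum fun τ _ => ?_) hΩ'.le
        have a1 : F (List.ofFn τ) ≤
            (if Good (List.ofFn τ) then 1 else 0) + total u (List.ofFn τ) := by
          have := total_nonneg hu (List.ofFn τ)
          by_cases hg : Good (List.ofFn τ)
          · simpa [hF, hg] using this
          · by_cases ht : 1 < total u (List.ofFn τ)
            · simpa [hF, hg, ht] using ht.le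
            · simpa [hF, hg, ht] using this
        have a2 : F (List.ofFn τ) = 0 ∨ F (List.ofFn τ) = 1 := by
          simp only [hF]; split_ifs <;> simp
        have a3 : D (List.ofFn τ) * F (List.ofFn τ) ≤
            ((if Good (List.ofFn τ) then 1 else 0) + total u (List.ofFn τ)) + 1 / 8 +
              2 * (D (List.ofFn τ) - 1) ^ 2 := by
          -- `z ≤ 2 z² + 1/8` for `z = D - 1`
          rcases a2 with h | h
          · rw [h] at a1 ⊢; nlinarith [sq_nonneg (D (List.ofFn τ) - 1)]
          · rw [h] at a1 ⊢; nlinarith [sq_nonneg (D (List.ofFn τ) - 1 - 1 / 4)]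
        have := mul_le_mul_of_nonneg_left a3 (seqProb_nonneg hp τ)
        refine this.trans (le_of_eq (by ring))
    _ ≤ _ := by
        refine mul_le_mul_of_nonneg_left ?_ hΩ'.le
        simp only [Finset.sum_add_distrib, ← Finset.mul_sum, Finset.sum_sub_distrib]
        simp only [Finset.sum_add_distrib, mul_add, e1, eD] at eD2 ⊢
        linarith

end Transcripts

/-! ### The hard instances -/

section Model

set_option linter.unusedSectionVars false

variable {S O A : Type} {K H : ℕ}

/-- The data common to all hard instances.  Latent states are the nodes of a tree of fully observed
states, moved deterministically by `move`, and two lock states `plus` and `minus`.  Leaving the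
tree (`exits s a`) leads to `minus` unless the instance says otherwise.  An observation is either
the name of a state or one of the `2K` lock symbols `Fin K × Bool`. -/
structure Env (S O A : Type) (K H : ℕ) where
  plus : S
  minus : S
  root : S
  move : S → A → S
  exits : S → A → Prop
  obs : O ≃ S ⊕ (Fin K × Bool)
  σ : ℝ
  ε : ℝ
  plus_ne_minus : plus ≠ minus
  root_ne_plus : root ≠ plus
  move_ne_plus : ∀ s a, move s a ≠ plus
  move_minus : ∀ a, move minus a = minus
  move_exits : ∀ s a, exits s a → move s a = minus
  not_exits_minus : ∀ a, ¬ exits minus a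
  not_exits_plus : ∀ a, ¬ exits plus a
  σ_pos : 0 < σ
  σ_le : σ ≤ 1
  growth : (1 + σ) ^ (2 * H) ≤ 3
  ε_pos : 0 < ε
  ε_le : ε ≤ 1
  K_pos : 0 < K

/-- The secret of an instance: the step, leaf and action `(hs, ss, as)` leading to `plus` with
probability `ε`, and the password `pw` that keeps the state at `plus`. -/
structure Lock (S A : Type) where
  hs : ℕ
  ss : S
  as : A
  pw : ℕ → A

/-- The sign of a bit. -/
def sgn (b : Bool) : ℝ := if b then 1 else -1

@[simp] lemma sgn_true : sgn true = 1 := rfl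
@[simp] lemma sgn_false : sgn false = -1 := rfl

lemma sgn_mul_self (b : Bool) : sgn b * sgn b = 1 := by cases b <;> simp

lemma abs_sgn (b : Bool) : |sgn b| = 1 := by cases b <;> simp

/-- The normalized correlation of two sign vectors. -/
def corr (μ μ' : Fin K → Bool) : ℝ := (∑ i, sgn (μ i) * sgn (μ' i)) / K

namespace Env

variable (E : Env S O A K H)

lemma growth_le {j : ℕ} (hj : j ≤ H) : (1 + E.σ) ^ j ≤ 7 / 4 := by
  have h1 : (1 : ℝ) ≤ 1 + E.σ := by linarith [E.σ_pos]
  have h2 : (1 + E.σ) ^ j ≤ (1 + E.σ) ^ H := pow_le_pow_right₀ h1 hj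
  have h3 := E.growth
  rw [mul_comm, pow_mul] at h3
  have h4 : 0 ≤ (1 + E.σ) ^ H := by positivity
  nlinarith

/-- Emission probabilities of `minus`: uniform on the lock symbols. -/
def base (o : O) : ℝ := Sum.elim (fun _ => 0) (fun _ => 1 / (2 * K : ℝ)) (E.obs o)

/-- The direction in which the emission of `plus` at step `h` is tilted away from uniform: given by
the hidden signs `μ` before the last step, and by the public sign at the last step. -/
def tilt (μ : Fin K → Bool) (h : ℕ) (o : O) : ℝ :=
  Sum.elim (fun _ => 0) (fun p => if h = H then sgn p.2 else sgn p.2 * sgn (μ p.1)) (E.obs o)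

/-- The size of the tilt at step `h`. -/
def amp (h : ℕ) : ℝ := if h = H then 1 else E.σ

/-- The emission likelihood ratio between `plus` and `minus` at step `h`. -/
def ratio (μ : Fin K → Bool) (h : ℕ) (o : O) : ℝ := 1 + E.amp h * E.tilt μ h o

/-- The indicator of the rewarding lock symbols. -/
def good (o : O) : ℝ := Sum.elim (fun _ => 0) (fun p : Fin K × Bool => if p.2 then (1 : ℝ) else 0) (E.obs o)

lemma amp_pos (h : ℕ) : 0 < E.amp h := by
  unfold amp; split_ifs
  · exact one_pos
  · exact E.σ_pos

lemma amp_le (h : ℕ) : E.amp h ≤ 1 := by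
  unfold amp; split_ifs
  · exact le_rfl
  · exact E.σ_le

lemma σ_le_amp (h : ℕ) : E.σ ≤ E.amp h := by
  unfold amp; split_ifs
  · exact E.σ_le
  · exact le_rfl

lemma abs_tilt_le (μ : Fin K → Bool) (h : ℕ) (o : O) : |E.tilt μ h o| ≤ 1 := by
  unfold tilt
  cases E.obs o with
  | inl s => simp
  | inr p => simp only [Sum.elim_inr]; split_ifs <;> simp [abs_mul, abs_sgn]

lemma ratio_nonneg (μ : Fin K → Bool) (h : ℕ) (o : O) : 0 ≤ E.ratio μ h o := by
  have h1 := abs_le.mp (E.abs_tilt_le μ h o)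
  have h2 := E.amp_pos h
  have h3 := E.amp_le h
  unfold ratio; nlinarith

lemma ratio_le (μ : Fin K → Bool) (h : ℕ) (o : O) : E.ratio μ h o ≤ 1 + E.amp h := by
  have h1 := abs_le.mp (E.abs_tilt_le μ h o)
  have h2 := E.amp_pos h
  unfold ratio; nlinarith

lemma base_nonneg (o : O) : 0 ≤ E.base o := by
  unfold base
  cases E.obs o <;> simp

lemma good_nonneg (o : O) : 0 ≤ E.good o := by
  unfold good
  cases E.obs o with
  | inl s => simp
  | inr p => simp only [Sum.elim_inr]; split_ifs <;> simp

lemma good_le (o : O) : E.good o ≤ 1 := by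
  unfold good
  cases E.obs o with
  | inl s => simp
  | inr p => simp only [Sum.elim_inr]; split_ifs <;> simp

variable [Fintype S] [Fintype O]

lemma sum_obs (F : S ⊕ (Fin K × Bool) → ℝ) :
    ∑ o, F (E.obs o) =
      ∑ s, F (Sum.inl s) + ∑ i, (F (Sum.inr (i, true)) + F (Sum.inr (i, false))) := by
  rw [E.obs.sum_comp, Fintype.sum_sum_type, Fintype.sum_prod_type]
  simp

lemma K_ne (E : Env S O A K H) : (K : ℝ) ≠ 0 := by exact_mod_cast E.K_pos.ne'

lemma sum_base : ∑ o, E.base o = 1 := by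
  have := E.K_ne
  rw [show (∑ o, E.base o) = _ from E.sum_obs (Sum.elim (fun _ => 0) (fun _ => 1 / (2 * K : ℝ)))]
  simp
  field_simp; norm_num

lemma sum_base_tilt (μ : Fin K → Bool) (h : ℕ) : ∑ o, E.base o * E.tilt μ h o = 0 := by
  rw [show (∑ o, E.base o * E.tilt μ h o) = _ from
    E.sum_obs (fun v => Sum.elim (fun _ => 0) (fun _ => 1 / (2 * K : ℝ)) v *
      Sum.elim (fun _ => 0) (fun p => if h = H then sgn p.2 else sgn p.2 * sgn (μ p.1)) v)]
  split_ifs <;> simp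

lemma sum_base_tilt_tilt (μ μ' : Fin K → Bool) (h : ℕ) :
    ∑ o, E.base o * (E.tilt μ h o * E.tilt μ' h o) = if h = H then 1 else corr μ μ' := by
  have := E.K_ne
  rw [show (∑ o, E.base o * (E.tilt μ h o * E.tilt μ' h o)) = _ from
    E.sum_obs (fun v => Sum.elim (fun _ => 0) (fun _ => 1 / (2 * K : ℝ)) v *
      (Sum.elim (fun _ => 0) (fun p => if h = H then sgn p.2 else sgn p.2 * sgn (μ p.1)) v *
      Sum.elim (fun _ => 0) (fun p => if h = H then sgn p.2 else sgn p.2 * sgn (μ' p.1)) v))]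
  split_ifs
  · simp
    field_simp; norm_num
  · simp [corr, Finset.sum_div]
    refine Finset.sum_congr rfl fun i _ => ?_
    field_simp; ring

lemma sum_base_good : ∑ o, E.base o * E.good o = 1 / 2 := by
  have := E.K_ne
  rw [show (∑ o, E.base o * E.good o) = _ from
    E.sum_obs (fun v => Sum.elim (fun _ => 0) (fun _ => 1 / (2 * K : ℝ)) v *
      (Sum.elim (fun _ => 0) (fun p : Fin K × Bool => if p.2 then (1 : ℝ) else 0) v))]
  simp
  field_simp

lemma sum_base_good_tilt (μ : Fin K → Bool) :
    ∑ o, E.base o * (E.good o * E.tilt μ H o) = 1 / 2 := by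
  have := E.K_ne
  rw [show (∑ o, E.base o * (E.good o * E.tilt μ H o)) = _ from
    E.sum_obs (fun v => Sum.elim (fun _ => 0) (fun _ => 1 / (2 * K : ℝ)) v *
      (Sum.elim (fun _ => 0) (fun p : Fin K × Bool => if p.2 then (1 : ℝ) else 0) v *
      Sum.elim (fun _ => 0) (fun p => if H = H then sgn p.2 else sgn p.2 * sgn (μ p.1)) v))]
  simp
  field_simp

lemma sum_base_ratio (μ : Fin K → Bool) (h : ℕ) : ∑ o, E.base o * E.ratio μ h o = 1 := by
  have e : ∀ o, E.base o * E.ratio μ h o =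
      E.base o + E.amp h * (E.base o * E.tilt μ h o) := fun o => by unfold ratio; ring
  simp only [e, Finset.sum_add_distrib, ← Finset.mul_sum, sum_base, sum_base_tilt]
  ring

lemma sum_base_ratio_ratio (μ μ' : Fin K → Bool) (h : ℕ) :
    ∑ o, E.base o * (E.ratio μ h o * E.ratio μ' h o) =
      1 + (if h = H then 1 else E.σ ^ 2 * corr μ μ') := by
  have e : ∀ o, E.base o * (E.ratio μ h o * E.ratio μ' h o) =
      E.base o + E.amp h * (E.base o * E.tilt μ h o) + E.amp h * (E.base o * E.tilt μ' h o) +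
      E.amp h ^ 2 * (E.base o * (E.tilt μ h o * E.tilt μ' h o)) := fun o => by unfold ratio; ring
  simp only [e, Finset.sum_add_distrib, ← Finset.mul_sum, sum_base, sum_base_tilt,
    sum_base_tilt_tilt]
  unfold amp
  split_ifs <;> ring

lemma sum_base_good_ratio (μ : Fin K → Bool) :
    ∑ o, E.base o * (E.good o * E.ratio μ H o) = 1 := by
  have e : ∀ o, E.base o * (E.good o * E.ratio μ H o) =
      E.base o * E.good o + E.amp H * (E.base o * (E.good o * E.tilt μ H o)) :=
    fun o => by unfold ratio; ring
  simp only [e, Finset.sum_add_distrib, ← Finset.mul_sum, sum_base_good, sum_base_good_tilt]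
  simp [amp]; norm_num

variable [DecidableEq S]

/-- The reference emission: tree states are revealed, both lock states emit uniform symbols. -/
def em (s : S) (o : O) : ℝ :=
  if s = E.plus ∨ s = E.minus then E.base o else if E.obs o = Sum.inl s then 1 else 0

lemma em_nonneg (s : S) (o : O) : 0 ≤ E.em s o := by
  unfold em
  split_ifs
  · exact E.base_nonneg o
  · exact zero_le_one
  · exact le_rfl

lemma sum_em (s : S) : ∑ o, E.em s o = 1 := by
  unfold em
  split_ifs
  · exact E.sum_base
  · have := E.sum_obs (fun v => if v = Sum.inl s then (1 : ℝ) else 0)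
    simpa using this

lemma sum_em_good_le (s : S) : ∑ o, E.em s o * E.good o ≤ 1 / 2 := by
  unfold em
  split_ifs
  · exact E.sum_base_good.le
  · have := E.sum_obs (fun v => (if v = Sum.inl s then (1 : ℝ) else 0) *
      Sum.elim (fun _ => 0) (fun p : Fin K × Bool => if p.2 then (1 : ℝ) else 0) v)
    rw [show (∑ o, (if E.obs o = Sum.inl s then (1 : ℝ) else 0) * E.good o) = _ from this]
    simp

lemma em_minus (o : O) : E.em E.minus o = E.base o := by simp [em]

lemma em_plus (o : O) : E.em E.plus o = E.base o := by simp [em]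

variable [DecidableEq A]

/-- Deterministic dynamics of the instance with lock `L`, with the random move at
`(hs, ss, as)` resolved to `plus` or `minus` according to `b`. -/
def step (L : Lock S A) (b : Bool) (h : ℕ) (s : S) (a : A) : S :=
  if s = E.plus then (if a = L.pw h then E.plus else E.minus)
  else if h = L.hs ∧ s = L.ss ∧ a = L.as then (if b then E.plus else E.minus)
  else E.move s a

variable [Fintype A]

/-- The hard instance with lock `L` and hidden emission signs `μ`. -/
def model (L : Lock S A) (μ : Fin K → Bool) : POMDP S O A H where
  init s := if s = E.root then 1 else 0
  init_nonneg s := by split_ifs <;> norm_num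
  init_sum := by simp
  trans h s a s' := (1 - E.ε) * (if s' = E.step L false h s a then 1 else 0) +
    E.ε * (if s' = E.step L true h s a then 1 else 0)
  trans_nonneg h s a s' := by
    have h1 := E.ε_pos
    have h2 : 0 ≤ 1 - E.ε := by linarith [E.ε_le]
    positivity
  trans_sum h s a := by simp [Finset.sum_add_distrib]
  emit h s o := E.em s o * (if s = E.plus then E.ratio μ h o else 1)
  emit_nonneg h s o := by
    refine mul_nonneg (E.em_nonneg s o) ?_
    split_ifs
    · exact E.ratio_nonneg μ h o
    · exact zero_le_one
  emit_sum h s := by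
    by_cases hs : s = E.plus
    · simp only [hs, if_true, em_plus]
      exact E.sum_base_ratio μ h
    · simpa [hs] using E.sum_em s
  reward h o _ := if h = H then E.good o else 0
  reward_nonneg h o _ := by
    split_ifs
    · exact E.good_nonneg o
    · exact le_rfl
  reward_le_one h o _ := by
    split_ifs
    · exact E.good_le o
    · exact zero_le_one
  reward_total τ := by
    rcases Nat.eq_zero_or_pos H with hH | hH
    · subst hH; simp
    · rw [Finset.sum_eq_single (⟨H - 1, by omega⟩ : Fin H)]
      · rw [if_pos (by simp; omega)]
        exact E.good_le _
      · intro b _ hb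
        rw [if_neg]
        intro h
        apply hb
        ext
        simp; omega
      · simp

/-! ### Revealing property -/

/-- For one-step matrices the `(* → 1)` norm is bounded by the largest absolute column sum. -/
lemma opNorm_le {S' O' A' : Type} [Fintype S'] [Fintype O'] [Fintype A']
    (B : Matrix S' ((Fin 1 → O') × (Fin (1 - 1) → A')) ℝ) {c : ℝ}
    (hB : ∀ p, ∑ s, |B s p| ≤ c) (hc : 0 ≤ c) : opNormStarOne B ≤ c := by
  refine csSup_le ⟨_, 0, ?_, rfl⟩ ?_
  · simp [starNorm]
  · rintro y ⟨x, hx, rfl⟩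
    have hx' : ∑ p, |x p| ≤ 1 := by
      have h1 : starNorm x = ∑ p, |x p| := by
        let _ : Unique (Fin (1 - 1) → A') := inferInstanceAs (Unique (Fin 0 → A'))
        rw [starNorm, Fintype.sum_prod_type, Finset.sum_comm]
        simp only [Fintype.sum_unique]
        rw [Real.sqrt_sq]
        exact Finset.sum_nonneg fun _ _ => abs_nonneg _
      rwa [← h1]
    calc ∑ s, |B.mulVec x s| ≤ ∑ s, ∑ p, |B s p| * |x p| := by
          refine Finset.sum_le_sum fun s _ => ?_
          simp only [Matrix.mulVec, dotProduct]
          refine (Finset.abs_sum_le_sum_abs _ _).trans (le_of_eq ?_)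
          simp [abs_mul]
      _ = ∑ p, (∑ s, |B s p|) * |x p| := by
          rw [Finset.sum_comm]
          simp [Finset.sum_mul]
      _ ≤ ∑ p, c * |x p| :=
          Finset.sum_le_sum fun p _ => mul_le_mul_of_nonneg_right (hB p) (abs_nonneg _)
      _ ≤ c := by
          rw [← Finset.mul_sum]
          nlinarith

/-- A left inverse of the step-`h` emission matrix: tree observations name their state, and the
tilt functional separates the two lock states. -/
def leftInv (μ : Fin K → Bool) (h : ℕ) (s : S) (o : O) : ℝ :=
  Sum.elim (fun t => if t = E.plus ∨ t = E.minus then 0 else if s = t then 1 else 0)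
    (fun _ => if s = E.plus then E.tilt μ h o / E.amp h
      else if s = E.minus then 1 - E.tilt μ h o / E.amp h else 0) (E.obs o)

lemma sum_abs_leftInv_le (μ : Fin K → Bool) (h : ℕ) (o : O) :
    ∑ s, |E.leftInv μ h s o| ≤ 1 + 2 / E.σ := by
  have hσ : 0 < 2 / E.σ := div_pos two_pos E.σ_pos
  unfold leftInv
  cases ho : E.obs o with
  | inl t =>
    simp only [Sum.elim_inl]
    split_ifs
    · simp; linarith
    · simp only [apply_ite abs, abs_one, abs_zero]
      simp; linarith
  | inr p =>
    simp only [Sum.elim_inr]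
    have hd : |E.tilt μ h o / E.amp h| ≤ 1 / E.σ := by
      rw [abs_div, abs_of_pos (E.amp_pos h)]
      exact div_le_div₀ zero_le_one (E.abs_tilt_le μ h o) E.σ_pos (E.σ_le_amp h)
    have hd' := abs_sub (1 : ℝ) (E.tilt μ h o / E.amp h)
    rw [abs_one] at hd'
    rw [← Finset.add_sum_erase _ _ (Finset.mem_univ E.plus),
      ← Finset.add_sum_erase _ _ (Finset.mem_erase.mpr
        ⟨E.plus_ne_minus.symm, Finset.mem_univ E.minus⟩), Finset.sum_eq_zero]
    · rw [if_pos rfl, if_neg E.plus_ne_minus.symm, if_pos rfl]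
      have : 2 / E.σ = 1 / E.σ + 1 / E.σ := by ring
      linarith
    · intro s hs
      simp only [Finset.mem_erase] at hs
      rw [if_neg hs.2.1, if_neg hs.1, abs_zero]

lemma sum_leftInv_emit (L : Lock S A) (μ : Fin K → Bool) (h : ℕ) (s t : S) :
    ∑ o, E.leftInv μ h s o * (E.model L μ).emit h t o = if s = t then 1 else 0 := by
  have hl : ∀ o, E.leftInv μ h s o * E.base o =
      if s = E.plus then E.base o * E.tilt μ h o / E.amp h
      else if s = E.minus then E.base o - E.base o * E.tilt μ h o / E.amp h else 0 := by
    intro o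
    unfold leftInv base
    cases ho : E.obs o with
    | inl t => simp
    | inr p => simp only [Sum.elim_inr]; split_ifs <;> ring
  have ha := (E.amp_pos h).ne'
  have hpm := E.plus_ne_minus
  change ∑ o, E.leftInv μ h s o * (E.em t o * (if t = E.plus then E.ratio μ h o else 1)) = _
  by_cases ht : t = E.plus
  · subst ht
    have e : ∀ o, E.leftInv μ h s o * (E.em E.plus o * E.ratio μ h o) =
        E.leftInv μ h s o * E.base o * E.ratio μ h o := fun o => by rw [em_plus]; ring
    simp only [if_true, e, hl]
    have q1 : ∑ o, E.base o * E.tilt μ h o / E.amp h * E.ratio μ h o = 1 := by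
      have e : ∀ o, E.base o * E.tilt μ h o / E.amp h * E.ratio μ h o =
          (E.base o * E.tilt μ h o) / E.amp h + E.base o * (E.tilt μ h o * E.tilt μ h o) :=
        fun o => by unfold ratio; field_simp
      simp only [e, Finset.sum_add_distrib, ← Finset.sum_div, sum_base_tilt, sum_base_tilt_tilt]
      have : corr μ μ = 1 := by
        simp [corr, sgn_mul_self, E.K_ne]
      simp [this]
    split_ifs with h1 h2
    · exact q1
    · simp only [sub_mul, Finset.sum_sub_distrib, q1, sum_base_ratio, sub_self]
    · simp
  · by_cases ht' : t = E.minus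
    · subst ht'
      have e : ∀ o, E.leftInv μ h s o * (E.em E.minus o * 1) =
          E.leftInv μ h s o * E.base o := fun o => by rw [em_minus]; ring
      simp only [ht, if_false, e, hl]
      split_ifs with h1 h2 h3
      · exact absurd (h1.symm.trans h2) hpm
      · rw [← Finset.sum_div, sum_base_tilt, zero_div]
      · rw [Finset.sum_sub_distrib, ← Finset.sum_div, sum_base_tilt, sum_base]; simp
      · simp
    · have hem : ∀ o, E.em t o = if E.obs o = Sum.inl t then 1 else 0 := fun o => by
        simp [em, ht, ht']
      simp only [ht, if_false, hem, mul_one]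
      rw [Finset.sum_eq_single (E.obs.symm (Sum.inl t))]
      · simp [leftInv, ht, ht']
      · intro o _ ho
        rw [if_neg, mul_zero]
        intro h; apply ho; rw [← h]; simp
      · simp

lemma revealing (L : Lock S A) (μ : Fin K → Bool) :
    (E.model L μ).IsRevealing 1 (E.σ / (E.σ + 2)) := by
  intro h _
  let _ : Unique (Fin (1 - 1) → A) := inferInstanceAs (Unique (Fin 0 → A))
  refine ⟨Matrix.of fun s p => E.leftInv μ h s (p.1 0), ?_, ?_⟩
  · intro c _
    have h1 : (Matrix.of fun s p => E.leftInv μ h s (p.1 0) :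
        Matrix S ((Fin 1 → O) × (Fin (1 - 1) → A)) ℝ) * (E.model L μ).emitActMatrix h 1 = 1 := by
      ext s t
      rw [Matrix.mul_apply, Matrix.one_apply, ← E.sum_leftInv_emit L μ h s t,
        Fintype.sum_prod_type]
      simp only [Fintype.sum_unique]
      exact (Equiv.funUnique (Fin 1) O).sum_comp
        (fun o => E.leftInv μ h s o * (E.model L μ).emit h t o)
    rw [h1, Matrix.one_mulVec]
  · have h1 : 1 / (E.σ / (E.σ + 2)) = 1 + 2 / E.σ := by
      have := E.σ_pos.ne'
      have := E.σ_pos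
      field_simp
    rw [h1]
    refine opNorm_le _ (fun p => E.sum_abs_leftInv_le μ h (p.1 0)) ?_
    have := E.σ_pos
    positivity

/-! ### Latent paths and the likelihood ratio of an episode -/

/-- The reference latent state after the history `l`. -/
def ref (l : List (O × A)) : S := acc E.root (fun _ s p => E.move s p.2) l

/-- The latent state after the history `l` under the resolved dynamics `step L b`. -/
def path (L : Lock S A) (b : Bool) (l : List (O × A)) : S :=
  acc E.root (fun l s p => E.step L b (l.length + 1) s p.2) l

lemma ref_snoc (l : List (O × A)) (p : O × A) : E.ref (l ++ [p]) = E.move (E.ref l) p.2 :=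
  acc_snoc _ _ _ _

lemma path_snoc (L : Lock S A) (b : Bool) (l : List (O × A)) (p : O × A) :
    E.path L b (l ++ [p]) = E.step L b (l.length + 1) (E.path L b l) p.2 :=
  acc_snoc _ _ _ _

lemma ref_ne_plus (l : List (O × A)) : E.ref l ≠ E.plus := by
  induction l using List.reverseRecOn with
  | nil => exact E.root_ne_plus
  | append_singleton l x _ => rw [ref_snoc]; exact E.move_ne_plus _ _

lemma path_false (L : Lock S A) (hL : E.exits L.ss L.as) (l : List (O × A)) :
    E.path L false l = E.ref l := by
  induction l using List.reverseRecOn with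
  | nil => rfl
  | append_singleton l x ih =>
    rw [path_snoc, ref_snoc, ih, step, if_neg (E.ref_ne_plus l)]
    by_cases h : l.length + 1 = L.hs ∧ E.ref l = L.ss ∧ x.2 = L.as
    · rw [if_pos h, h.2.1, h.2.2, E.move_exits _ _ hL]
      simp
    · rw [if_neg h]

/-- The resolved path differs from the reference path only by sitting at `plus` instead of
`minus`. -/
lemma path_true (L : Lock S A) (hL : E.exits L.ss L.as) (l : List (O × A)) :
    (E.path L true l = E.plus ∧ E.ref l = E.minus) ∨
      (E.path L true l ≠ E.plus ∧ E.path L true l = E.ref l) := by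
  induction l using List.reverseRecOn with
  | nil => exact Or.inr ⟨E.root_ne_plus, rfl⟩
  | append_singleton l x ih =>
    rw [path_snoc, ref_snoc]
    rcases ih with ⟨h1, h2⟩ | ⟨h1, h2⟩
    · rw [h1, h2, E.move_minus, step, if_pos rfl]
      split_ifs
      · exact Or.inl ⟨rfl, rfl⟩
      · exact Or.inr ⟨E.plus_ne_minus.symm, rfl⟩
    · rw [step, if_neg h1]
      by_cases h : l.length + 1 = L.hs ∧ E.path L true l = L.ss ∧ x.2 = L.as
      · rw [if_pos h, if_pos rfl]
        refine Or.inl ⟨rfl, ?_⟩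
        rw [← h2, h.2.1, h.2.2, E.move_exits _ _ hL]
      · rw [if_neg h]
        exact Or.inr ⟨E.move_ne_plus _ _, by rw [h2]⟩

lemma ref_of_path (L : Lock S A) (hL : E.exits L.ss L.as) {l : List (O × A)}
    (h : E.path L true l = E.plus) : E.ref l = E.minus := by
  rcases E.path_true L hL l with h' | h'
  · exact h'.2
  · exact absurd h h'.1

/-- The likelihood ratio of the history `l` for the dynamics in which the secret move surely leads
to `plus`, relative to the reference. -/
def lr (L : Lock S A) (μ : Fin K → Bool) (l : List (O × A)) : ℝ :=
  acc 1 (fun l c p => c * if E.path L true l = E.plus then E.ratio μ (l.length + 1) p.1 else 1) l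

lemma lr_snoc (L : Lock S A) (μ : Fin K → Bool) (l : List (O × A)) (p : O × A) :
    E.lr L μ (l ++ [p]) = E.lr L μ l *
      if E.path L true l = E.plus then E.ratio μ (l.length + 1) p.1 else 1 :=
  acc_snoc _ _ _ _

lemma lr_nonneg (L : Lock S A) (μ : Fin K → Bool) (l : List (O × A)) : 0 ≤ E.lr L μ l := by
  induction l using List.reverseRecOn with
  | nil => simp [lr]
  | append_singleton l x ih =>
    rw [lr_snoc]
    refine mul_nonneg ih ?_
    split_ifs
    · exact E.ratio_nonneg _ _ _
    · exact zero_le_one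

/-- Before the last step the likelihood ratio is bounded, since each of its factors is at most
`1 + σ`. -/
lemma lr_le_pow (L : Lock S A) (μ : Fin K → Bool) (l : List (O × A)) (hl : l.length < H) :
    E.lr L μ l ≤ (1 + E.σ) ^ l.length := by
  induction l using List.reverseRecOn with
  | nil => simp [lr]
  | append_singleton l x ih =>
    rw [List.length_append, List.length_singleton] at hl
    rw [lr_snoc, List.length_append, List.length_singleton, pow_succ]
    have h1 := ih (by omega)
    have h0 := E.σ_pos
    refine mul_le_mul h1 ?_ ?_ (by positivity)
    · split_ifs
      · refine (E.ratio_le _ _ _).trans (le_of_eq ?_)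
        rw [amp, if_neg (by omega)]
      · linarith
    · split_ifs
      · exact E.ratio_nonneg _ _ _
      · exact zero_le_one

lemma lr_le (L : Lock S A) (μ : Fin K → Bool) (l : List (O × A)) (hl : l.length < H) :
    E.lr L μ l ≤ 7 / 4 :=
  (E.lr_le_pow L μ l hl).trans (E.growth_le hl.le)

lemma lr_mul_le (L : Lock S A) (μ μ' : Fin K → Bool) (l : List (O × A)) (hl : l.length < H) :
    E.lr L μ l * E.lr L μ' l ≤ 3 := by
  have h1 := E.lr_le_pow L μ l hl
  have h2 := E.lr_le_pow L μ' l hl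
  have h0 := E.σ_pos
  calc _ ≤ (1 + E.σ) ^ l.length * (1 + E.σ) ^ l.length :=
        mul_le_mul h1 h2 (E.lr_nonneg _ _ _) (by positivity)
    _ = (1 + E.σ) ^ (2 * l.length) := by rw [← pow_add]; congr 1; omega
    _ ≤ (1 + E.σ) ^ (2 * H) := pow_le_pow_right₀ (by linarith) (by omega)
    _ ≤ 3 := E.growth

/-- The reference law of one (observation, action) pair given the history. -/
def kern (π : Policy O A) (l : List (O × A)) (p : O × A) : ℝ :=
  E.em (E.ref l) p.1 * π.act l p.1 p.2

lemma kern_nonneg (π : Policy O A) (l : List (O × A)) (p : O × A) : 0 ≤ E.kern π l p :=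
  mul_nonneg (E.em_nonneg _ _) (π.act_nonneg _ _ _)

lemma sum_kern (π : Policy O A) (l : List (O × A)) (Φ : O → ℝ) :
    ∑ p, E.kern π l p * Φ p.1 = ∑ o, E.em (E.ref l) o * Φ o := by
  rw [Fintype.sum_prod_type]
  refine Finset.sum_congr rfl fun o _ => ?_
  simp only [kern]
  calc _ = (E.em (E.ref l) o * Φ o) * ∑ a, π.act l o a := by
        rw [Finset.mul_sum]; exact Finset.sum_congr rfl fun a _ => by ring
    _ = _ := by rw [π.act_sum, mul_one]

lemma sum_kern_one (π : Policy O A) (l : List (O × A)) : ∑ p, E.kern π l p = 1 := by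
  have := E.sum_kern π l (fun _ => 1)
  simpa [sum_em] using this

lemma take_ofFn_succ {X : Type} {N : ℕ} (τ : Fin N → X) (i : ℕ) (hi : i < N) :
    (List.ofFn τ).take (i + 1) = (List.ofFn τ).take i ++ [τ ⟨i, hi⟩] := by
  rw [List.take_succ_eq_append_getElem (by simpa using hi)]
  simp

/-- With deterministic dynamics the sum over latent paths has a single nonzero term. -/
lemma sum_paths (D : ℕ → S → A → S) (r : S) (φ : Fin H → S → ℝ) (τ : Fin H → O × A) :
    ∑ s : Fin H → S, ∏ h : Fin H,
      (if h.1 = 0 then (if s h = r then 1 else 0) else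
        (if s h = D h.1 (s ⟨h.1 - 1, Nat.lt_of_le_of_lt (Nat.sub_le _ _) h.2⟩)
          (τ ⟨h.1 - 1, Nat.lt_of_le_of_lt (Nat.sub_le _ _) h.2⟩).2 then (1 : ℝ) else 0)) *
        φ h (s h) =
      ∏ h : Fin H, φ h
        (acc r (fun l s p => D (l.length + 1) s p.2) ((List.ofFn τ).take h.1)) := by
  set P : Fin H → S := fun h =>
    acc r (fun l s p => D (l.length + 1) s p.2) ((List.ofFn τ).take h.1) with hP
  have hPs : ∀ (i : ℕ) (hi : i + 1 < H),
      P ⟨i + 1, hi⟩ = D (i + 1) (P ⟨i, by omega⟩) (τ ⟨i, by omega⟩).2 := by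
    intro i hi
    simp only [hP]
    rw [take_ofFn_succ τ i (by omega), acc_snoc]
    simp
    rw [min_eq_left (by omega)]
  rw [Finset.sum_eq_single P]
  · refine Finset.prod_congr rfl fun h _ => ?_
    obtain ⟨h, hh⟩ := h
    cases h with
    | zero => simp [hP]
    | succ i =>
      rw [if_neg (by simp), if_pos, one_mul]
      exact hPs i hh
  · intro s _ hs
    by_contra hne
    replace hne := Finset.prod_ne_zero_iff.mp hne
    apply hs
    have : ∀ (i : ℕ) (hi : i < H), s ⟨i, hi⟩ = P ⟨i, hi⟩ := by
      intro i
      induction i with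
      | zero =>
        intro hi
        have := left_ne_zero_of_mul (hne ⟨0, hi⟩ (Finset.mem_univ _))
        simp only [if_true] at this
        have h2 : s ⟨0, hi⟩ = r := by by_contra h; simp [h] at this
        rw [h2]; simp [hP]
      | succ i ih =>
        intro hi
        have := left_ne_zero_of_mul (hne ⟨i + 1, hi⟩ (Finset.mem_univ _))
        rw [if_neg (by simp)] at this
        have h2 := ite_ne_right_iff.mp this
        rw [hPs i hi, h2.1]
        congr 1
        exact ih (by omega)
    funext i
    exact this i.1 i.2
  · simp

/-- The law of an episode is the reference law times `1 - ε + ε · lr`: the only random transition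
is used at most once, so the law is affine in `ε`. -/
lemma trajProb_eq (L : Lock S A) (hL : E.exits L.ss L.as) (hH : L.hs < H)
    (μ : Fin K → Bool) (π : Policy O A) (τ : Fin H → O × A) :
    (E.model L μ).trajProb π τ =
      seqProb (E.kern π) τ * (1 - E.ε + E.ε * E.lr L μ (List.ofFn τ)) := by
  set φ : Fin H → S → ℝ := fun h s => (E.model L μ).emit (h.1 + 1) s (τ h).1 *
    π.act ((List.ofFn τ).take h.1) (τ h).1 (τ h).2 with hφ
  -- `t b s h` is the weight of the latent move into `s h` under `step L b`
  set t : Bool → (Fin H → S) → Fin H → ℝ := fun b s h =>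
    (if h.1 = 0 then (if s h = E.root then 1 else 0) else
        (if s h = E.step L b h.1 (s ⟨h.1 - 1, Nat.lt_of_le_of_lt (Nat.sub_le _ _) h.2⟩)
          (τ ⟨h.1 - 1, Nat.lt_of_le_of_lt (Nat.sub_le _ _) h.2⟩).2 then (1 : ℝ) else 0)) with ht
  have hsame : ∀ s (h : Fin H), h ≠ ⟨L.hs, hH⟩ → t true s h = t false s h := by
    intro s h hne
    have : h.1 ≠ L.hs := fun hh => hne (Fin.ext hh)
    simp [ht, step, this]
  have expand : (E.model L μ).trajProb π τ =
      ∑ s : Fin H → S, ((1 - E.ε) * ∏ h, t false s h * φ h (s h) +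
        E.ε * ∏ h, t true s h * φ h (s h)) := by
    unfold POMDP.trajProb
    refine Finset.sum_congr rfl fun s _ => ?_
    have hf : ∀ h : Fin H,
        (if h.1 = 0 then (E.model L μ).init (s h)
          else (E.model L μ).trans h.1
            (s ⟨h.1 - 1, Nat.lt_of_le_of_lt (Nat.sub_le _ _) h.2⟩)
            (τ ⟨h.1 - 1, Nat.lt_of_le_of_lt (Nat.sub_le _ _) h.2⟩).2 (s h)) *
          (E.model L μ).emit (h.1 + 1) (s h) (τ h).1 *
          π.act ((List.ofFn τ).take h.1) (τ h).1 (τ h).2 =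
        ((1 - E.ε) * t false s h + E.ε * t true s h) * φ h (s h) := by
      intro h
      rw [mul_assoc]
      congr 1
      simp only [ht]
      by_cases h1 : h.1 = 0
      · simp only [if_pos h1]
        simp only [model]
        ring
      · simp only [if_neg h1]
        rfl
    rw [Finset.prod_congr rfl fun h _ => hf h]
    rw [← Finset.mul_prod_erase _ _ (Finset.mem_univ (⟨L.hs, hH⟩ : Fin H)),
      ← Finset.mul_prod_erase _ (fun h => t false s h * φ h (s h))
        (Finset.mem_univ (⟨L.hs, hH⟩ : Fin H)),
      ← Finset.mul_prod_erase _ (fun h => t true s h * φ h (s h))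
        (Finset.mem_univ (⟨L.hs, hH⟩ : Fin H))]
    have e1 : ∏ h ∈ Finset.univ.erase (⟨L.hs, hH⟩ : Fin H),
        ((1 - E.ε) * t false s h + E.ε * t true s h) * φ h (s h) =
        ∏ h ∈ Finset.univ.erase (⟨L.hs, hH⟩ : Fin H), t false s h * φ h (s h) :=
      Finset.prod_congr rfl fun h hh => by
        rw [hsame s h (Finset.ne_of_mem_erase hh)]; ring
    have e2 : ∏ h ∈ Finset.univ.erase (⟨L.hs, hH⟩ : Fin H), t true s h * φ h (s h) =
        ∏ h ∈ Finset.univ.erase (⟨L.hs, hH⟩ : Fin H), t false s h * φ h (s h) :=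
      Finset.prod_congr rfl fun h hh => by
        rw [hsame s h (Finset.ne_of_mem_erase hh)]
    rw [e1, e2]
    ring
  rw [expand, Finset.sum_add_distrib, ← Finset.mul_sum, ← Finset.mul_sum,
    sum_paths (E.step L false) E.root φ τ, sum_paths (E.step L true) E.root φ τ]
  have f1 : ∏ h : Fin H, φ h (acc E.root (fun l s p => E.step L false (l.length + 1) s p.2)
      ((List.ofFn τ).take h.1)) = seqProb (E.kern π) τ := by
    refine Finset.prod_congr rfl fun h _ => ?_
    have := E.path_false L hL ((List.ofFn τ).take h.1)
    unfold path at this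
    rw [this]
    simp [hφ, model, kern, E.ref_ne_plus]
  have f2 : ∏ h : Fin H, φ h (acc E.root (fun l s p => E.step L true (l.length + 1) s p.2)
      ((List.ofFn τ).take h.1)) = seqProb (E.kern π) τ * E.lr L μ (List.ofFn τ) := by
    have : E.lr L μ (List.ofFn τ) = _ := acc_mul_ofFn (fun l p =>
      if E.path L true l = E.plus then E.ratio μ (l.length + 1) p.1 else 1) τ
    rw [this, ← seqProb_mul]
    refine Finset.prod_congr rfl fun h _ => ?_
    change φ h (E.path L true ((List.ofFn τ).take h.1)) = _
    have hlen : ((List.ofFn τ).take h.1).length = h.1 := by simp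
    rcases E.path_true L hL ((List.ofFn τ).take h.1) with ⟨h1, h2⟩ | ⟨h1, h2⟩
    · simp only [h1, if_true, hlen, hφ, kern, h2, em_minus]
      simp only [model, em_plus, if_true]
      ring
    · simp only [h1, if_false, hφ, kern, mul_one]
      simp only [model, h1, if_false, mul_one]
      rw [h2]
  rw [f1, f2]
  ring

/-! ### Moments of the likelihood ratio -/

/-- The `wt`-weighted time spent at `plus` along the history `l` (under the resolved dynamics). -/
def occ (wt : ℕ → ℝ) (L : Lock S A) (l : List (O × A)) : ℝ :=
  acc 0 (fun l c _ => c + if E.path L true l = E.plus then wt (l.length + 1) else 0) l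

lemma occ_snoc (wt : ℕ → ℝ) (L : Lock S A) (l : List (O × A)) (p : O × A) :
    E.occ wt L (l ++ [p]) =
      E.occ wt L l + if E.path L true l = E.plus then wt (l.length + 1) else 0 :=
  acc_snoc _ _ _ _

/-- Expected `wt`-weighted time at `plus` under the reference law of the policy `π`. -/
def ecost (wt : ℕ → ℝ) (L : Lock S A) (π : Policy O A) : ℝ :=
  ∑ τ : Fin H → O × A, seqProb (E.kern π) τ * E.occ wt L (List.ofFn τ)

/-- Weight selecting the steps before the last one. -/
def early (H : ℕ) (h : ℕ) : ℝ := if h = H then 0 else 1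

/-- Weight selecting the last step. -/
def final (H : ℕ) (h : ℕ) : ℝ := if h = H then 1 else 0

lemma early_nonneg (h : ℕ) : 0 ≤ early H h := by unfold early; split_ifs <;> simp

lemma final_nonneg (h : ℕ) : 0 ≤ final H h := by unfold final; split_ifs <;> simp

lemma occ_nonneg {wt : ℕ → ℝ} (hw : ∀ h, 0 ≤ wt h) (L : Lock S A) (l : List (O × A)) :
    0 ≤ E.occ wt L l := by
  induction l using List.reverseRecOn with
  | nil => simp [occ]
  | append_singleton l x ih =>
    rw [occ_snoc]
    have := hw (l.length + 1)
    split_ifs <;> linarith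

lemma ecost_nonneg {wt : ℕ → ℝ} (hw : ∀ h, 0 ≤ wt h) (L : Lock S A) (π : Policy O A) :
    0 ≤ E.ecost wt L π :=
  Finset.sum_nonneg fun τ _ => mul_nonneg (seqProb_nonneg (E.kern_nonneg π) τ)
    (E.occ_nonneg hw L _)

lemma sum_kern_plus (L : Lock S A) (hL : E.exits L.ss L.as) (π : Policy O A)
    {l : List (O × A)} (h : E.path L true l = E.plus) (Φ : O → ℝ) :
    ∑ p, E.kern π l p * Φ p.1 = ∑ o, E.base o * Φ o := by
  rw [sum_kern, E.ref_of_path L hL h]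
  simp only [em_minus]

lemma sum_kern_lr (L : Lock S A) (hL : E.exits L.ss L.as) (μ : Fin K → Bool) (π : Policy O A)
    (l : List (O × A)) : ∑ p, E.kern π l p * E.lr L μ (l ++ [p]) = E.lr L μ l := by
  simp only [lr_snoc]
  split_ifs with h
  · calc _ = E.lr L μ l * ∑ p, E.kern π l p * E.ratio μ (l.length + 1) p.1 := by
          rw [Finset.mul_sum]; exact Finset.sum_congr rfl fun p _ => by ring
      _ = _ := by rw [E.sum_kern_plus L hL π h, sum_base_ratio, mul_one]
  · rw [← Finset.sum_mul, sum_kern_one]; ring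

lemma sum_lr (L : Lock S A) (hL : E.exits L.ss L.as) (μ : Fin K → Bool) (π : Policy O A) :
    ∑ τ : Fin H → O × A, seqProb (E.kern π) τ * E.lr L μ (List.ofFn τ) = 1 := by
  have a := sum_seqProb_le (E.kern_nonneg π) H (E.lr L μ)
    (fun l _ => (E.sum_kern_lr L hL μ π l).le)
  have b := le_sum_seqProb (E.kern_nonneg π) H (E.lr L μ)
    (fun l _ => (E.sum_kern_lr L hL μ π l).ge)
  exact le_antisymm (by simpa [lr] using a) (by simpa [lr] using b)

/-- The mixed second moment of two likelihood ratios with the same lock exceeds `1` only through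
the time spent at `plus`: the early steps contribute proportionally to the correlation of the
hidden signs. -/
lemma sum_lr_lr (L : Lock S A) (hL : E.exits L.ss L.as) (μ μ' : Fin K → Bool) (π : Policy O A) :
    ∑ τ : Fin H → O × A, seqProb (E.kern π) τ *
        (E.lr L μ (List.ofFn τ) * E.lr L μ' (List.ofFn τ)) ≤
      1 + 3 * (E.σ ^ 2 * |corr μ μ'| * E.ecost (early H) L π + E.ecost (final H) L π) := by
  set c : ℝ := E.σ ^ 2 * |corr μ μ'| with hc
  have hc0 : 0 ≤ c := by positivity
  have key := sum_seqProb_le (E.kern_nonneg π) H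
    (fun l => E.lr L μ l * E.lr L μ' l -
      3 * (c * E.occ (early H) L l + E.occ (final H) L l)) (fun l hl => by
    simp only [lr_snoc, occ_snoc]
    split_ifs with h
    · calc _ = E.lr L μ l * E.lr L μ' l *
            (∑ p, E.kern π l p * (E.ratio μ (l.length + 1) p.1 * E.ratio μ' (l.length + 1) p.1))
            - (∑ p, E.kern π l p) * (3 * (c * (E.occ (early H) L l + early H (l.length + 1)) +
              (E.occ (final H) L l + final H (l.length + 1)))) := by
              rw [Finset.mul_sum, Finset.sum_mul, ← Finset.sum_sub_distrib]
              exact Finset.sum_congr rfl fun p _ => by ring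
        _ ≤ _ := by
              rw [E.sum_kern_plus L hL π h
                  (fun o => E.ratio μ (l.length + 1) o * E.ratio μ' (l.length + 1) o),
                sum_base_ratio_ratio, sum_kern_one]
              have h3 := E.lr_mul_le L μ μ' l hl
              have h0 := mul_nonneg (E.lr_nonneg L μ l) (E.lr_nonneg L μ' l)
              unfold early final
              split_ifs
              · linarith
              · have : E.σ ^ 2 * corr μ μ' ≤ c :=
                  mul_le_mul_of_nonneg_left (le_abs_self _) (sq_nonneg _)
                nlinarith
    · simp only [mul_one, add_zero]
      rw [← Finset.sum_mul, sum_kern_one, one_mul])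
  have h0 : E.lr L μ [] * E.lr L μ' [] -
      3 * (c * E.occ (early H) L [] + E.occ (final H) L []) = 1 := by simp [lr, occ]
  rw [h0] at key
  have e : ∑ τ : Fin H → O × A, seqProb (E.kern π) τ *
      (E.lr L μ (List.ofFn τ) * E.lr L μ' (List.ofFn τ) -
        3 * (c * E.occ (early H) L (List.ofFn τ) + E.occ (final H) L (List.ofFn τ))) =
      ∑ τ : Fin H → O × A, seqProb (E.kern π) τ *
        (E.lr L μ (List.ofFn τ) * E.lr L μ' (List.ofFn τ)) -
      3 * (c * E.ecost (early H) L π + E.ecost (final H) L π) := by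
    unfold ecost
    rw [Finset.mul_sum, ← Finset.sum_add_distrib, Finset.mul_sum, ← Finset.sum_sub_distrib]
    exact Finset.sum_congr rfl fun τ _ => by ring
  rw [e] at key
  linarith

/-- The likelihood ratio of a full episode of the instance relative to the reference. -/
def elr (L : Lock S A) (μ : Fin K → Bool) (τ : Fin H → O × A) : ℝ :=
  1 - E.ε + E.ε * E.lr L μ (List.ofFn τ)

lemma elr_nonneg (L : Lock S A) (μ : Fin K → Bool) (τ : Fin H → O × A) : 0 ≤ E.elr L μ τ := by
  have h1 := mul_nonneg E.ε_pos.le (E.lr_nonneg L μ (List.ofFn τ))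
  have h2 := E.ε_le
  unfold elr
  linarith

lemma sum_ref (π : Policy O A) : ∑ τ : Fin H → O × A, seqProb (E.kern π) τ = 1 :=
  sum_seqProb_eq_one (E.kern_nonneg π) H (E.sum_kern_one π)

lemma sum_elr (L : Lock S A) (hL : E.exits L.ss L.as) (μ : Fin K → Bool) (π : Policy O A) :
    ∑ τ : Fin H → O × A, seqProb (E.kern π) τ * E.elr L μ τ = 1 := by
  have h1 := E.sum_lr L hL μ π
  have h2 := E.sum_ref π
  calc _ = (1 - E.ε) * ∑ τ : Fin H → O × A, seqProb (E.kern π) τ +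
        E.ε * ∑ τ : Fin H → O × A, seqProb (E.kern π) τ * E.lr L μ (List.ofFn τ) := by
        rw [Finset.mul_sum, Finset.mul_sum, ← Finset.sum_add_distrib]
        exact Finset.sum_congr rfl fun τ _ => by unfold elr; ring
    _ = 1 := by rw [h1, h2]; ring

lemma sum_elr_elr (L : Lock S A) (hL : E.exits L.ss L.as) (μ μ' : Fin K → Bool)
    (π : Policy O A) :
    ∑ τ : Fin H → O × A, seqProb (E.kern π) τ * (E.elr L μ τ * E.elr L μ' τ) ≤
      1 + 3 * E.ε ^ 2 *
        (E.σ ^ 2 * |corr μ μ'| * E.ecost (early H) L π + E.ecost (final H) L π) := by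
  have h1 := E.sum_lr L hL μ π
  have h1' := E.sum_lr L hL μ' π
  have h2 := E.sum_ref π
  have h3 := E.sum_lr_lr L hL μ μ' π
  calc _ = (1 - E.ε) ^ 2 * ∑ τ : Fin H → O × A, seqProb (E.kern π) τ +
        E.ε * (1 - E.ε) * ∑ τ : Fin H → O × A, seqProb (E.kern π) τ * E.lr L μ (List.ofFn τ) +
        E.ε * (1 - E.ε) * ∑ τ : Fin H → O × A, seqProb (E.kern π) τ * E.lr L μ' (List.ofFn τ) +
        E.ε ^ 2 * ∑ τ : Fin H → O × A, seqProb (E.kern π) τ *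
          (E.lr L μ (List.ofFn τ) * E.lr L μ' (List.ofFn τ)) := by
        simp only [Finset.mul_sum]
        simp only [← Finset.sum_add_distrib]
        exact Finset.sum_congr rfl fun τ _ => by unfold elr; ring
    _ ≤ _ := by
        rw [h1, h2, h1']
        have := mul_le_mul_of_nonneg_left h3 (sq_nonneg E.ε)
        linarith

/-! ### Values -/

/-- The reward collected along a history. -/
def rew (l : List (O × A)) : ℝ :=
  acc 0 (fun l c p => c + if l.length + 1 = H then E.good p.1 else 0) l

lemma rew_snoc (l : List (O × A)) (p : O × A) :
    E.rew (l ++ [p]) = E.rew l + if l.length + 1 = H then E.good p.1 else 0 :=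
  acc_snoc _ _ _ _

lemma rew_nonneg (l : List (O × A)) : 0 ≤ E.rew l := by
  induction l using List.reverseRecOn with
  | nil => simp [rew]
  | append_singleton l x ih =>
    rw [rew_snoc]
    have := E.good_nonneg x.1
    split_ifs <;> linarith

lemma value_eq (L : Lock S A) (hL : E.exits L.ss L.as) (hH : L.hs < H)
    (μ : Fin K → Bool) (π : Policy O A) :
    (E.model L μ).value π =
      ∑ τ : Fin H → O × A, seqProb (E.kern π) τ * (E.elr L μ τ * E.rew (List.ofFn τ)) := by
  unfold POMDP.value
  refine Finset.sum_congr rfl fun τ _ => ?_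
  rw [E.trajProb_eq L hL hH, ← elr, mul_assoc]
  congr 2
  rw [rew, acc_add_ofFn]
  refine Finset.sum_congr rfl fun h _ => ?_
  simp [model]

/-- Any value gained over `1/2` is paid for by reaching `plus` at the last step. -/
lemma value_le (L : Lock S A) (hL : E.exits L.ss L.as) (hH : L.hs < H)
    (μ : Fin K → Bool) (π : Policy O A) :
    (E.model L μ).value π ≤ 1 / 2 + E.ε * (7 / 8 * E.ecost (final H) L π) := by
  have hH0 : 0 < H := by omega
  have k1 := sum_seqProb_le (E.kern_nonneg π) H
    (fun l => E.rew l + if l.length < H then 1 / 2 else 0) (fun l hl => by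
      simp only [rew_snoc, List.length_append, List.length_singleton, if_pos hl]
      by_cases h : l.length + 1 = H
      · simp only [h, if_true, lt_irrefl, if_false, add_zero]
        simp only [mul_add, Finset.sum_add_distrib]
        rw [← Finset.sum_mul, sum_kern_one, sum_kern]
        linarith [E.sum_em_good_le (E.ref l)]
      · have h' : l.length + 1 < H := by omega
        simp only [if_neg h, if_pos h', add_zero]
        rw [← Finset.sum_mul, sum_kern_one, one_mul])
  have k2 := sum_seqProb_le (E.kern_nonneg π) H
    (fun l => E.lr L μ l * (E.rew l + if l.length < H then 1 / 2 else 0) -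
      7 / 8 * E.occ (final H) L l) (fun l hl => by
      have hlr := E.lr_le L μ l hl
      have hlr0 := E.lr_nonneg L μ l
      simp only [rew_snoc, List.length_append, List.length_singleton, if_pos hl, occ_snoc]
      by_cases h : l.length + 1 = H
      · simp only [h, if_true, lt_irrefl, if_false, add_zero, lr_snoc]
        by_cases hp : E.path L true l = E.plus
        · simp only [if_pos hp]
          calc _ = E.lr L μ l * E.rew l * (∑ p, E.kern π l p * E.ratio μ H p.1) +
                E.lr L μ l * (∑ p, E.kern π l p * (E.good p.1 * E.ratio μ H p.1)) -
                (∑ p, E.kern π l p) * (7 / 8 * (E.occ (final H) L l + final H H)) := by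
                rw [Finset.mul_sum, Finset.mul_sum, Finset.sum_mul, ← Finset.sum_add_distrib,
                  ← Finset.sum_sub_distrib]
                exact Finset.sum_congr rfl fun p _ => by ring
            _ ≤ _ := by
                rw [E.sum_kern_plus L hL π hp (E.ratio μ H),
                  E.sum_kern_plus L hL π hp (fun o => E.good o * E.ratio μ H o), sum_base_ratio,
                  sum_base_good_ratio, sum_kern_one, final, if_pos rfl]
                linarith
        · simp only [if_neg hp, mul_one, add_zero]
          calc _ = (∑ p, E.kern π l p) * (E.lr L μ l * E.rew l - 7 / 8 * E.occ (final H) L l) +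
                E.lr L μ l * (∑ p, E.kern π l p * E.good p.1) := by
                rw [Finset.mul_sum, Finset.sum_mul, ← Finset.sum_add_distrib]
                exact Finset.sum_congr rfl fun p _ => by ring
            _ ≤ _ := by
                rw [sum_kern_one, sum_kern]
                nlinarith [E.sum_em_good_le (E.ref l)]
      · have h' : l.length + 1 < H := by omega
        have hfin : final H (l.length + 1) = 0 := if_neg h
        simp only [if_neg h, if_pos h', add_zero, hfin, ite_self]
        calc _ = (E.rew l + 1 / 2) * (∑ p, E.kern π l p * E.lr L μ (l ++ [p])) -
              (∑ p, E.kern π l p) * (7 / 8 * E.occ (final H) L l) := by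
              rw [Finset.mul_sum, Finset.sum_mul, ← Finset.sum_sub_distrib]
              exact Finset.sum_congr rfl fun p _ => by ring
          _ ≤ _ := by
              rw [sum_kern_lr E L hL, sum_kern_one]
              linarith)
  simp only [List.length_ofFn, lt_irrefl, if_false, add_zero, List.length_nil, if_pos hH0] at k1 k2
  have z1 : E.rew [] = 0 := rfl
  have z2 : E.lr L μ [] = 1 := rfl
  have z3 : E.occ (final H) L [] = 0 := rfl
  rw [z1] at k1
  rw [z1, z2, z3] at k2
  rw [E.value_eq L hL hH]
  have e : ∑ τ : Fin H → O × A, seqProb (E.kern π) τ * (E.elr L μ τ * E.rew (List.ofFn τ)) =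
      (1 - E.ε) * (∑ τ : Fin H → O × A, seqProb (E.kern π) τ * E.rew (List.ofFn τ)) +
      E.ε * (∑ τ : Fin H → O × A, seqProb (E.kern π) τ *
        (E.lr L μ (List.ofFn τ) * E.rew (List.ofFn τ) - 7 / 8 * E.occ (final H) L (List.ofFn τ)))
      + E.ε * (7 / 8 * E.ecost (final H) L π) := by
    unfold ecost
    simp only [Finset.mul_sum]
    simp only [← Finset.sum_add_distrib]
    exact Finset.sum_congr rfl fun τ _ => by unfold elr; ring
  rw [e]
  have h1 := E.ε_pos
  have h2 : 0 ≤ 1 - E.ε := by linarith [E.ε_le]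
  nlinarith [mul_le_mul_of_nonneg_left k1 h2, mul_le_mul_of_nonneg_left k2 h1.le]

/-- The state reached from the root by the open-loop plan `pl`. -/
def walk (pl : ℕ → A) : ℕ → S
  | 0 => E.root
  | i + 1 => E.move (walk pl i) (pl (i + 1))

lemma walk_ne_plus (pl : ℕ → A) (i : ℕ) : E.walk pl i ≠ E.plus := by
  cases i with
  | zero => exact E.root_ne_plus
  | succ i => exact E.move_ne_plus _ _

/-- The plan that reaches the secret leaf by `pl`, makes the secret move, and then plays the
password. -/
def solve (L : Lock S A) (pl : ℕ → A) (h : ℕ) : A :=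
  if h < L.hs then pl h else if h = L.hs then L.as else L.pw h

/-- The open-loop policy playing the plan `g`. -/
def planPolicy (g : ℕ → A) : Policy O A where
  act l _ a := if a = g (l.length + 1) then 1 else 0
  act_nonneg _ _ _ := by split_ifs <;> norm_num
  act_sum _ _ := by simp

/-- The history `l` follows the plan `g`. -/
def follows (g : ℕ → A) (l : List (O × A)) : Prop :=
  acc True (fun l c p => c ∧ p.2 = g (l.length + 1)) l

lemma follows_snoc (g : ℕ → A) (l : List (O × A)) (p : O × A) :
    follows g (l ++ [p]) ↔ follows g l ∧ p.2 = g (l.length + 1) := by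
  unfold follows; rw [acc_snoc]

lemma path_follows (L : Lock S A) (hpos : 0 < L.hs) (pl : ℕ → A)
    (hpl : E.walk pl (L.hs - 1) = L.ss) (l : List (O × A)) (hl : follows (solve L pl) l) :
    (l.length < L.hs → E.path L true l = E.walk pl l.length) ∧
      (L.hs ≤ l.length → E.path L true l = E.plus) := by
  induction l using List.reverseRecOn with
  | nil => exact ⟨fun _ => rfl, fun h => by simp at h; omega⟩
  | append_singleton l x ih =>
    rw [follows_snoc] at hl
    obtain ⟨i1, i2⟩ := ih hl.1
    rw [path_snoc, hl.2, List.length_append, List.length_singleton]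
    refine ⟨fun h => ?_, fun h => ?_⟩
    · have h' : l.length < L.hs := by omega
      rw [i1 h', step, if_neg (E.walk_ne_plus _ _), if_neg (by omega), solve, if_pos h]
      rfl
    · by_cases h' : l.length < L.hs
      · have e : l.length + 1 = L.hs := by omega
        have e' : l.length = L.hs - 1 := by omega
        rw [i1 h', step, if_neg (E.walk_ne_plus _ _), if_pos, if_pos rfl]
        refine ⟨e, by rw [e', hpl], ?_⟩
        rw [solve, if_neg (by omega), if_pos e]
      · rw [i2 (by omega), step, if_pos rfl, if_pos]
        rw [solve, if_neg (by omega), if_neg (by omega)]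

lemma sum_kern_plan (g : ℕ → A) (l : List (O × A)) (Φ : O × A → ℝ) :
    ∑ p, E.kern (planPolicy g) l p * Φ p =
      ∑ o, E.em (E.ref l) o * Φ (o, g (l.length + 1)) := by
  rw [Fintype.sum_prod_type]
  refine Finset.sum_congr rfl fun o _ => ?_
  simp [kern, planPolicy]

open Classical in
/-- The solving plan has value at least `1/2 + ε/2`. -/
lemma value_plan (L : Lock S A) (hL : E.exits L.ss L.as) (hpos : 0 < L.hs) (hH : L.hs < H)
    (μ : Fin K → Bool) (pl : ℕ → A) (hpl : E.walk pl (L.hs - 1) = L.ss) :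
    1 / 2 + E.ε / 2 ≤ (E.model L μ).value (planPolicy (solve L pl)) := by
  have hH0 : 0 < H := by omega
  have hε := E.ε_pos
  have hε' : 0 ≤ 1 - E.ε := by linarith [E.ε_le]
  set g := solve L pl with hg
  -- conditional expectation of the rewarded likelihood ratio along the plan
  set Z : List (O × A) → ℝ := fun l => if follows g l then
      (1 - E.ε + E.ε * E.lr L μ l) * E.rew l +
        (if l.length < H then (1 - E.ε) / 2 + E.ε * E.lr L μ l else 0) else 0 with hZ
  have nn : ∀ l, 0 ≤ Z l := by
    intro l
    have := E.lr_nonneg L μ l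
    have := E.rew_nonneg l
    simp only [hZ]
    split_ifs <;> positivity
  have key := le_sum_seqProb (E.kern_nonneg (planPolicy g)) H Z (fun l hl => by
    by_cases hf : follows g l
    · rw [E.sum_kern_plan g l (fun p => Z (l ++ [p]))]
      simp only [hZ, follows_snoc, hf, true_and, if_true, if_pos hl, rew_snoc,
        List.length_append, List.length_singleton]
      by_cases h : l.length + 1 = H
      · have hp := (E.path_follows L hpos pl hpl l hf).2 (by omega)
        simp only [h, if_true, lt_irrefl, if_false, add_zero, lr_snoc, if_pos hp,
          E.ref_of_path L hL hp, em_minus]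
        refine le_of_eq ?_
        calc _ = (1 - E.ε) * (E.rew l * 1 + 1 / 2) + E.ε * E.lr L μ l * (E.rew l * 1 + 1) := by
              ring
          _ = (1 - E.ε) * (E.rew l * (∑ o, E.base o) + ∑ o, E.base o * E.good o) +
              E.ε * E.lr L μ l * (E.rew l * (∑ o, E.base o * E.ratio μ H o) +
                ∑ o, E.base o * (E.good o * E.ratio μ H o)) := by
              rw [sum_base, sum_base_good, sum_base_ratio, sum_base_good_ratio]
          _ = _ := by
              simp only [Finset.mul_sum, ← Finset.sum_add_distrib]
              exact Finset.sum_congr rfl fun o _ => by ring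
      · have h' : l.length + 1 < H := by omega
        simp only [if_neg h, if_pos h', add_zero]
        have m1 : ∑ o, E.em (E.ref l) o * E.lr L μ (l ++ [(o, g (l.length + 1))]) =
            E.lr L μ l := by
          rw [← E.sum_kern_plan g l (fun p => E.lr L μ (l ++ [p])), E.sum_kern_lr L hL]
        refine le_of_eq ?_
        calc _ = ((1 - E.ε) * E.rew l + (1 - E.ε) / 2) * (∑ o, E.em (E.ref l) o) +
              (E.ε * E.rew l + E.ε) *
                (∑ o, E.em (E.ref l) o * E.lr L μ (l ++ [(o, g (l.length + 1))])) := by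
              rw [m1, sum_em]; ring
          _ = _ := by
              simp only [Finset.mul_sum, ← Finset.sum_add_distrib]
              exact Finset.sum_congr rfl fun o _ => by ring
    · have : Z l = 0 := by simp [hZ, hf]
      rw [this]
      exact Finset.sum_nonneg fun p _ => mul_nonneg (E.kern_nonneg _ _ _) (nn _))
  have z0 : Z [] = 1 / 2 + E.ε / 2 := by
    have : follows g ([] : List (O × A)) := by simp [follows]
    have z1 : E.rew [] = 0 := rfl
    have z2 : E.lr L μ [] = 1 := rfl
    simp only [hZ, if_pos this, List.length_nil, if_pos hH0, z1, z2]
    ring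
  rw [← z0, E.value_eq L hL hH]
  refine key.trans (Finset.sum_le_sum fun τ _ => ?_)
  refine mul_le_mul_of_nonneg_left ?_ (seqProb_nonneg (E.kern_nonneg _) τ)
  have := mul_nonneg (E.elr_nonneg L μ τ) (E.rew_nonneg (List.ofFn τ))
  simp only [hZ, List.length_ofFn, lt_irrefl, if_false, add_zero]
  split_ifs
  · exact le_rfl
  · exact this

lemma occ_final_le (L : Lock S A) (l : List (O × A)) :
    E.occ (final H) L l ≤ if H ≤ l.length then 1 else 0 := by
  induction l using List.reverseRecOn with
  | nil =>
    have : E.occ (final H) L [] = 0 := rfl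
    rw [this]; split_ifs <;> norm_num
  | append_singleton l x ih =>
    rw [occ_snoc, List.length_append, List.length_singleton]
    by_cases h1 : H ≤ l.length
    · rw [if_pos h1] at ih
      have hf : final H (l.length + 1) = 0 := if_neg (by omega)
      rw [hf, ite_self, add_zero, if_pos (by omega)]
      exact ih
    · rw [if_neg h1] at ih
      by_cases h2 : l.length + 1 = H
      · have hf : final H (l.length + 1) = 1 := if_pos h2
        rw [hf, if_pos h2.ge]
        split_ifs <;> linarith
      · have hf : final H (l.length + 1) = 0 := if_neg h2
        rw [hf, ite_self, add_zero, if_neg (by omega)]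
        exact ih

/-- A policy that is `ε/8`-optimal plays the whole password with substantial probability even under
the reference law. -/
lemma ecost_of_accurate (L : Lock S A) (hL : E.exits L.ss L.as) (hpos : 0 < L.hs) (hH : L.hs < H)
    (μ : Fin K → Bool) (pl : ℕ → A) (hpl : E.walk pl (L.hs - 1) = L.ss) (π : Policy O A)
    (h : (E.model L μ).optValue - (E.model L μ).value π < E.ε / 8) :
    1 ≤ 7 / 3 * E.ecost (final H) L π := by
  have hbdd : BddAbove (Set.range fun π' : Policy O A => (E.model L μ).value π') := by
    refine ⟨1 / 2 + E.ε * (7 / 8), ?_⟩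
    rintro _ ⟨π', rfl⟩
    refine (E.value_le L hL hH μ π').trans ?_
    have : E.ecost (final H) L π' ≤ 1 := by
      rw [← E.sum_ref π', ecost]
      refine Finset.sum_le_sum fun τ _ => ?_
      have h1 := E.occ_final_le L (List.ofFn τ)
      rw [List.length_ofFn, if_pos le_rfl] at h1
      exact mul_le_of_le_one_right (seqProb_nonneg (E.kern_nonneg _) τ) h1
    have := E.ε_pos
    nlinarith
  have h1 : (E.model L μ).value (planPolicy (solve L pl)) ≤ (E.model L μ).optValue :=
    le_ciSup hbdd _
  have h2 := E.value_plan L hL hpos hH μ pl hpl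
  have h3 := E.value_le L hL hH μ π
  have h4 := E.ε_pos
  have h5 : E.ε * (3 / 8) < E.ε * (7 / 8 * E.ecost (final H) L π) := by linarith
  have := lt_of_mul_lt_mul_left h5 h4.le
  linarith

/-! ### Averaging over arms and passwords -/

open Classical in
/-- The move (step, state, action) by which the history leaves the tree, if it does. -/
def pull (l : List (O × A)) : Option (ℕ × S × A) :=
  acc none (fun l c p =>
    if E.exits (E.ref l) p.2 then some (l.length + 1, E.ref l, p.2) else c) l

open Classical in
lemma pull_snoc (l : List (O × A)) (p : O × A) :
    E.pull (l ++ [p]) =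
      if E.exits (E.ref l) p.2 then some (l.length + 1, E.ref l, p.2) else E.pull l :=
  acc_snoc _ _ _ _

lemma ref_of_pull {l : List (O × A)} {x : ℕ × S × A} (h : E.pull l = some x) :
    E.ref l = E.minus := by
  induction l using List.reverseRecOn with
  | nil => simp [pull] at h
  | append_singleton l p ih =>
    rw [ref_snoc]
    rw [pull_snoc] at h
    split_ifs at h with he
    · exact E.move_exits _ _ he
    · rw [ih h, E.move_minus]

/-- The tree is left at most once, so a trajectory pulls at most one arm. -/
lemma pull_append {l : List (O × A)} {x : ℕ × S × A} (h : E.pull l = some x)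
    (l' : List (O × A)) : E.pull (l ++ l') = some x := by
  induction l' using List.reverseRecOn with
  | nil => simpa using h
  | append_singleton l' p ih =>
    rw [← List.append_assoc, pull_snoc, if_neg, ih]
    rw [E.ref_of_pull ih]
    exact E.not_exits_minus _

/-- Being at `plus` certifies the arm pulled and all password letters played so far. -/
lemma path_plus (L : Lock S A) (hL : E.exits L.ss L.as) (l : List (O × A))
    (h : E.path L true l = E.plus) :
    E.pull l = some (L.hs, L.ss, L.as) ∧ L.hs ≤ l.length ∧
      ∀ i, L.hs < i → i ≤ l.length → (l.map Prod.snd)[i - 1]? = some (L.pw i) := by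
  induction l using List.reverseRecOn with
  | nil => exact absurd h E.root_ne_plus
  | append_singleton l x ih =>
    rw [path_snoc] at h
    by_cases hp : E.path L true l = E.plus
    · obtain ⟨h1, h2, h3⟩ := ih hp
      refine ⟨E.pull_append h1 _, by simp; omega, fun i hi hi' => ?_⟩
      have ha : x.2 = L.pw (l.length + 1) := by
        by_contra ha
        rw [hp, step, if_pos rfl, if_neg ha] at h
        exact E.plus_ne_minus h.symm
      rw [List.length_append, List.length_singleton] at hi'
      rw [List.map_append]
      by_cases hil : i ≤ l.length
      · rw [List.getElem?_append_left (by simp; omega)]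
        exact h3 i hi hil
      · have : i = l.length + 1 := by omega
        subst this
        rw [List.getElem?_append_right (by simp)]
        simpa using ha
    · have hr : E.path L true l = E.ref l := by
        rcases E.path_true L hL l with h' | h'
        · exact absurd h'.1 hp
        · exact h'.2
      rw [step, if_neg hp] at h
      by_cases hc : l.length + 1 = L.hs ∧ E.path L true l = L.ss ∧ x.2 = L.as
      · have he : E.exits (E.ref l) x.2 := by rw [← hr, hc.2.1, hc.2.2]; exact hL
        refine ⟨?_, by simp; omega, fun i hi hi' => ?_⟩
        · rw [pull_snoc, if_pos he, hc.1, ← hr, hc.2.1, hc.2.2]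
        · rw [List.length_append, List.length_singleton] at hi'
          omega
      · rw [if_neg hc] at h
        exact absurd h (E.move_ne_plus _ _)

/-- The lock with arm `x` and password `pw`. -/
def lock (x : ℕ × S × A) (pw : Fin H → A) : Lock S A :=
  ⟨x.1, x.2.1, x.2.2, fun h => if hh : h < H then pw ⟨h, hh⟩ else x.2.2⟩

/-- A history agrees with at most the fraction `|A|^{-k}` of all passwords, where `k` is the number
of letters played since the arm was pulled. -/
lemma count_pw (x : ℕ × S × A) (hx : E.exits x.2.1 x.2.2) (l : List (O × A)) (hl : l.length < H) :
    ∑ pw : Fin H → A, (if E.path (lock x pw) true l = E.plus then (1 : ℝ) else 0) ≤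
      if E.pull l = some x ∧ x.1 ≤ l.length then
        (Fintype.card A : ℝ) ^ H * (1 / (Fintype.card A : ℝ)) ^ (l.length - x.1) else 0 := by
  have hcA : (0 : ℝ) < Fintype.card A := by
    have : 0 < Fintype.card A := Fintype.card_pos_iff.mpr ⟨x.2.2⟩
    exact_mod_cast this
  split_ifs with hc
  · set P : ℕ → Prop := fun i => x.1 < i ∧ i ≤ l.length with hP
    set F : Fin H → Finset A := fun i => if P i.1 then
      {((l.map Prod.snd)[i.1 - 1]?).getD x.2.2} else Finset.univ with hF
    have sub : Finset.univ.filter (fun pw : Fin H → A => E.path (lock x pw) true l = E.plus) ⊆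
        Fintype.piFinset F := by
      intro pw hpw
      rw [Finset.mem_filter] at hpw
      obtain ⟨-, -, h3⟩ := E.path_plus (lock x pw) hx l hpw.2
      rw [Fintype.mem_piFinset]
      intro i
      simp only [hF]
      split_ifs with hi
      · have := h3 i.1 hi.1 hi.2
        rw [this]
        simp [lock]
      · exact Finset.mem_univ _
    have card : ((Fintype.piFinset F).card : ℝ) * (Fintype.card A : ℝ) ^ (l.length - x.1) =
        (Fintype.card A : ℝ) ^ H := by
      rw [Fintype.card_piFinset, Nat.cast_prod]
      have e1 : ∀ i : Fin H, (((F i).card : ℕ) : ℝ) = if P i.1 then 1 else (Fintype.card A : ℝ) := by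
        intro i
        simp only [hF]
        split_ifs <;> simp
      have e2 : (Fintype.card A : ℝ) ^ (l.length - x.1) =
          ∏ i : Fin H, if P i.1 then (Fintype.card A : ℝ) else 1 := by
        rw [← Finset.prod_range (fun i => if P i then (Fintype.card A : ℝ) else 1),
          Finset.prod_ite, Finset.prod_const, Finset.prod_const_one, mul_one]
        congr 1
        have : (Finset.range H).filter P = Finset.Ioc x.1 l.length := by
          ext i
          simp only [Finset.mem_filter, Finset.mem_range, Finset.mem_Ioc, hP]
          omega
        rw [this, Nat.card_Ioc]
      rw [e2, ← Finset.prod_mul_distrib]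
      have e3 : ∀ i : Fin H, ((F i).card : ℝ) * (if P i.1 then (Fintype.card A : ℝ) else 1) =
          Fintype.card A := by
        intro i
        rw [e1]
        split_ifs <;> simp
      simp [e3]
    rw [← Finset.sum_filter, Finset.sum_const, nsmul_eq_mul, mul_one, ← card]
    have h1 : ((Finset.univ.filter
        (fun pw : Fin H → A => E.path (lock x pw) true l = E.plus)).card : ℝ) ≤
        (Fintype.piFinset F).card := by exact_mod_cast Finset.card_le_card sub
    refine h1.trans (le_of_eq ?_)
    rw [mul_assoc, ← mul_pow, mul_one_div_cancel hcA.ne', one_pow, mul_one]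
  · refine le_of_eq (Finset.sum_eq_zero fun pw _ => if_neg fun h => hc ?_)
    obtain ⟨h1, h2, -⟩ := E.path_plus (lock x pw) hx l h
    exact ⟨h1, h2⟩

lemma occ_ofFn (wt : ℕ → ℝ) (L : Lock S A) (τ : Fin H → O × A) :
    E.occ wt L (List.ofFn τ) = ∑ h : Fin H, wt (h.1 + 1) *
      (if E.path L true ((List.ofFn τ).take h.1) = E.plus then 1 else 0) := by
  rw [occ, acc_add_ofFn (fun l _ => if E.path L true l = E.plus then wt (l.length + 1) else 0)]
  refine Finset.sum_congr rfl fun h _ => ?_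
  have : ((List.ofFn τ).take h.1).length = h.1 := by simp
  rw [this]
  split_ifs <;> simp

/-- The total weighted occupation over all passwords vanishes unless the arm is pulled, and is
then controlled by a geometric sum. -/
lemma sum_pw_occ {wt : ℕ → ℝ} (hw : ∀ h, 0 ≤ wt h) (x : ℕ × S × A)
    (hx : E.exits x.2.1 x.2.2) (τ : Fin H → O × A) {B : ℝ}
    (hB : ∑ h ∈ Finset.range H, wt (h + 1) *
      (if x.1 ≤ h then (1 / (Fintype.card A : ℝ)) ^ (h - x.1) else 0) ≤ B) :
    ∑ pw : Fin H → A, E.occ wt (lock x pw) (List.ofFn τ) ≤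
      (Fintype.card A : ℝ) ^ H * B * if E.pull (List.ofFn τ) = some x then 1 else 0 := by
  simp only [occ_ofFn]
  rw [Finset.sum_comm]
  have h1 : ∀ h : Fin H, ∑ pw : Fin H → A, wt (h.1 + 1) *
      (if E.path (lock x pw) true ((List.ofFn τ).take h.1) = E.plus then (1 : ℝ) else 0) ≤
      (wt (h.1 + 1) * (if x.1 ≤ h.1 then (1 / (Fintype.card A : ℝ)) ^ (h.1 - x.1) else 0)) *
      ((Fintype.card A : ℝ) ^ H * if E.pull (List.ofFn τ) = some x then 1 else 0) := by
    intro h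
    have hlen : ((List.ofFn τ).take h.1).length = h.1 := by simp
    have := E.count_pw x hx ((List.ofFn τ).take h.1) (by rw [hlen]; exact h.2)
    rw [hlen] at this
    rw [← Finset.mul_sum, mul_assoc]
    refine mul_le_mul_of_nonneg_left (this.trans ?_) (hw _)
    by_cases hc : E.pull ((List.ofFn τ).take h.1) = some x ∧ x.1 ≤ h.1
    · have hp : E.pull (List.ofFn τ) = some x := by
        rw [← List.take_append_drop h.1 (List.ofFn τ)]
        exact E.pull_append hc.1 _
      rw [if_pos hc, if_pos hc.2, if_pos hp]
      linarith
    · rw [if_neg hc]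
      split_ifs <;> positivity
  refine (Finset.sum_le_sum fun h _ => h1 h).trans ?_
  rw [← Finset.sum_mul, Fin.sum_univ_eq_sum_range (fun h => wt (h + 1) *
    (if x.1 ≤ h then (1 / (Fintype.card A : ℝ)) ^ (h - x.1) else 0))]
  rw [mul_comm ((Fintype.card A : ℝ) ^ H) B, mul_assoc]
  refine mul_le_mul_of_nonneg_right hB ?_
  split_ifs <;> simp

lemma sum_arms_ecost {ι : Type} [Fintype ι] {wt : ℕ → ℝ} (hw : ∀ h, 0 ≤ wt h)
    (arm : ι → ℕ × S × A) (hinj : Function.Injective arm)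
    (hx : ∀ i, E.exits (arm i).2.1 (arm i).2.2) {B : ℝ} (hB0 : 0 ≤ B)
    (hB : ∀ i, ∑ h ∈ Finset.range H, wt (h + 1) *
      (if (arm i).1 ≤ h then (1 / (Fintype.card A : ℝ)) ^ (h - (arm i).1) else 0) ≤ B)
    (π : Policy O A) :
    ∑ i, ∑ pw : Fin H → A, E.ecost wt (lock (arm i) pw) π ≤ (Fintype.card A : ℝ) ^ H * B := by
  have pt : ∀ τ : Fin H → O × A,
      ∑ i, ∑ pw : Fin H → A, E.occ wt (lock (arm i) pw) (List.ofFn τ) ≤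
        (Fintype.card A : ℝ) ^ H * B := by
    intro τ
    refine (Finset.sum_le_sum fun i _ => E.sum_pw_occ hw (arm i) (hx i) τ (hB i)).trans ?_
    rw [← Finset.mul_sum]
    refine mul_le_of_le_one_right (by positivity) ?_
    cases hp : E.pull (List.ofFn τ) with
    | none => simp
    | some y =>
      rw [← Finset.sum_filter, Finset.sum_const, nsmul_eq_mul, mul_one]
      have : (Finset.univ.filter fun i => some y = some (arm i)).card ≤ 1 := by
        rw [Finset.card_le_one]
        intro a ha b hb
        simp only [Finset.mem_filter, Option.some.injEq] at ha hb
        exact hinj (ha.2.symm.trans hb.2)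
      exact_mod_cast this
  unfold ecost
  calc _ = ∑ τ : Fin H → O × A, seqProb (E.kern π) τ *
        ∑ i, ∑ pw : Fin H → A, E.occ wt (lock (arm i) pw) (List.ofFn τ) := by
        simp only [Finset.mul_sum]
        rw [Finset.sum_comm]
        conv_rhs => rw [Finset.sum_comm]
        rw [Finset.sum_comm]
        exact Finset.sum_congr rfl fun i _ => Finset.sum_comm
    _ ≤ ∑ τ : Fin H → O × A, seqProb (E.kern π) τ * ((Fintype.card A : ℝ) ^ H * B) :=
        Finset.sum_le_sum fun τ _ =>
          mul_le_mul_of_nonneg_left (pt τ) (seqProb_nonneg (E.kern_nonneg _) τ)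
    _ = _ := by rw [← Finset.sum_mul, sum_ref, one_mul]

lemma early_sum_le {r : ℝ} (h0 : 0 ≤ r) (h1 : r ≤ 1 / 3) (a N : ℕ) :
    ∑ h ∈ Finset.range N, early N (h + 1) * (if a ≤ h then r ^ (h - a) else 0) ≤ 3 / 2 := by
  have e1 : ∑ h ∈ Finset.range N, early N (h + 1) * (if a ≤ h then r ^ (h - a) else 0) ≤
      ∑ h ∈ Finset.range N, (if a ≤ h then r ^ (h - a) else 0) := by
    refine Finset.sum_le_sum fun h _ => ?_
    have h2 : early N (h + 1) ≤ 1 := by unfold early; split_ifs <;> norm_num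
    refine mul_le_of_le_one_left ?_ h2
    split_ifs <;> positivity
  refine e1.trans ?_
  rw [← Finset.sum_filter]
  have e2 : (Finset.range N).filter (fun h => a ≤ h) = Finset.Ico a N := by
    ext i; simp; omega
  rw [e2, Finset.sum_Ico_eq_sum_range]
  simp only [Nat.add_sub_cancel_left]
  have g := geom_sum_mul r (N - a)
  have g0 : 0 ≤ ∑ i ∈ Finset.range (N - a), r ^ i := Finset.sum_nonneg fun _ _ => by positivity
  have g1 : 0 ≤ r ^ (N - a) := by positivity
  nlinarith

lemma final_sum_le {r : ℝ} (h0 : 0 ≤ r) (h1 : r ≤ 1) (a b N : ℕ) (hab : a ≤ b) :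
    ∑ h ∈ Finset.range N, final N (h + 1) * (if a ≤ h then r ^ (h - a) else 0) ≤
      r ^ (N - 1 - b) := by
  rcases Nat.eq_zero_or_pos N with hN | hN
  · subst hN; simp
  · rw [Finset.sum_eq_single_of_mem (N - 1) (by simp; omega)]
    · rw [final, if_pos (by omega), one_mul]
      split_ifs
      · exact pow_le_pow_of_le_one h0 h1 (by omega)
      · positivity
    · intro h hh hne
      rw [Finset.mem_range] at hh
      rw [final, if_neg (by omega), zero_mul]

/-! ### The lower bound for an abstract family of arms -/

open Real in
/-- Averaging over the hidden signs, the correlation is sub-Gaussian at scale `1 / √K`. -/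
lemma sum_exp_corr (hK : 0 < K) (μ : Fin K → Bool) (c : ℝ) :
    ∑ μ' : Fin K → Bool, exp (c * corr μ μ') ≤ 2 ^ K * exp (c ^ 2 / (2 * K)) := by
  have hK' : (K : ℝ) ≠ 0 := by exact_mod_cast hK.ne'
  have e1 : ∀ μ' : Fin K → Bool, exp (c * corr μ μ') =
      ∏ i, exp (c / K * (sgn (μ i) * sgn (μ' i))) := by
    intro μ'
    rw [← exp_sum, ← Finset.mul_sum]
    congr 1
    unfold corr
    ring
  have e2 : ∀ i, ∑ b : Bool, exp (c / K * (sgn (μ i) * sgn b)) = 2 * cosh (c / K) := by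
    intro i
    rw [cosh_eq]
    cases μ i <;> simp <;> ring
  have e3 : ∑ μ' : Fin K → Bool, exp (c * corr μ μ') = (2 * cosh (c / K)) ^ K := by
    simp only [e1]
    have := Finset.prod_univ_sum (fun _ : Fin K => (Finset.univ : Finset Bool))
      (fun i b => exp (c / K * (sgn (μ i) * sgn b)))
    rw [Fintype.piFinset_univ] at this
    rw [← this, Finset.prod_congr rfl fun i _ => e2 i]
    simp
  rw [e3, mul_pow]
  refine mul_le_mul_of_nonneg_left ?_ (by positivity)
  calc cosh (c / K) ^ K ≤ exp ((c / K) ^ 2 / 2) ^ K :=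
        pow_le_pow_left₀ (cosh_pos _).le (cosh_le_exp_half_sq _) _
    _ = exp (c ^ 2 / (2 * K)) := by
        rw [← exp_nat_mul]
        congr 1
        field_simp

open Real in
lemma exp_abs_le (x : ℝ) : exp |x| ≤ 1 + 3 / 200 + (2 + 100 / 3) * (cosh x - 1) := by
  -- `e^|x| = 2 cosh x - e^{-|x|}`, and `|x| ≤ (x² / s + s) / 2` with `s = 3 / 100`
  have h1 : exp |x| = 2 * cosh x - exp (-|x|) := by
    rw [← cosh_abs, cosh_eq]; ring
  have h2 := add_one_le_exp (-|x|)
  have h3 : x ^ 2 / 2 ≤ cosh x - 1 := by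
    have h5 : cosh x = 1 + 2 * sinh (|x| / 2) ^ 2 := by
      rw [← cosh_abs, show |x| = 2 * (|x| / 2) by ring, cosh_two_mul, cosh_sq]
      ring_nf
    have h6 : |x| / 2 ≤ sinh (|x| / 2) := self_le_sinh_iff.mpr (by positivity)
    have h7 := pow_le_pow_left₀ (by positivity) h6 2
    rw [div_pow, sq_abs] at h7
    linarith
  have h4 : |x| ≤ 100 / 3 * (x ^ 2 / 2) + 3 / 200 := by
    rw [← sq_abs]
    nlinarith [sq_nonneg (|x| - 3 / 100)]
  rw [h1]
  linarith

open Real in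
/-- The chi-square term of the sign mixture is small. -/
lemma sum_exp_abs_corr (hK : 0 < K) :
    ∑ μ : Fin K → Bool, ∑ μ' : Fin K → Bool,
      exp (3 / 100 * √K * |corr μ μ'| + 3 / 100) ≤
      (1 + 0.064) * (Fintype.card (Fin K → Bool) : ℝ) ^ 2 := by
  have hK' : (0 : ℝ) < K := by exact_mod_cast hK
  set c : ℝ := 3 / 100 * √K with hc
  have hc0 : 0 ≤ c := by positivity
  have hcK : c ^ 2 / (2 * K) = 0.00045 := by
    rw [hc, mul_pow, sq_sqrt hK'.le]; field_simp; norm_num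
  have hcard : (Fintype.card (Fin K → Bool) : ℝ) = 2 ^ K := by simp
  have hexp1 : exp 0.00045 ≤ 1 + 0.000451 := by
    have := abs_exp_sub_one_sub_id_le (x := 0.00045) (by norm_num [abs_of_pos])
    have := (abs_le.mp this).2
    norm_num at this ⊢; linarith
  have hexp2 : exp (3 / 100) ≤ 1 + 0.0309 := by
    have := abs_exp_sub_one_sub_id_le (x := 3 / 100) (by norm_num [abs_of_pos])
    have := (abs_le.mp this).2
    norm_num at this ⊢; linarith
  have row : ∀ μ : Fin K → Bool, ∑ μ' : Fin K → Bool, exp (c * |corr μ μ'| + 3 / 100) ≤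
      (1 + 0.064) * 2 ^ K := by
    intro μ
    have h1 := sum_exp_corr hK μ c
    have h2 := sum_exp_corr hK μ (-c)
    rw [neg_sq] at h2
    rw [hcK] at h1 h2
    have h3 : ∑ μ' : Fin K → Bool, cosh (c * corr μ μ') ≤ 2 ^ K * (1 + 0.000451) := by
      have e : ∀ μ' : Fin K → Bool, cosh (c * corr μ μ') =
          exp (c * corr μ μ') / 2 + exp (-c * corr μ μ') / 2 := fun μ' => by
        rw [cosh_eq, neg_mul]; ring
      simp only [e, Finset.sum_add_distrib, ← Finset.sum_div]
      have := mul_le_mul_of_nonneg_left hexp1 (show (0 : ℝ) ≤ 2 ^ K by positivity)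
      linarith
    have h4 : ∑ μ' : Fin K → Bool, exp |c * corr μ μ'| ≤ 2 ^ K * (1 + 0.031) := by
      calc _ ≤ ∑ μ' : Fin K → Bool,
            (1 + 3 / 200 + (2 + 100 / 3) * (cosh (c * corr μ μ') - 1)) :=
            Finset.sum_le_sum fun μ' _ => exp_abs_le _
        _ = 2 ^ K * (1 + 3 / 200 - (2 + 100 / 3)) +
            (2 + 100 / 3) * ∑ μ' : Fin K → Bool, cosh (c * corr μ μ') := by
            rw [Finset.mul_sum]
            have : ∀ μ' : Fin K → Bool, 1 + 3 / 200 + (2 + 100 / 3) * (cosh (c * corr μ μ') - 1) =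
              (1 + 3 / 200 - (2 + 100 / 3)) + (2 + 100 / 3) * cosh (c * corr μ μ') :=
              fun μ' => by ring
            simp only [this, Finset.sum_add_distrib, Finset.sum_const, Finset.card_univ,
              nsmul_eq_mul, hcard]
        _ ≤ _ := by
            have : (0 : ℝ) < 2 ^ K := by positivity
            nlinarith
    have e : ∀ μ' : Fin K → Bool, exp (c * |corr μ μ'| + 3 / 100) =
        exp |c * corr μ μ'| * exp (3 / 100) := fun μ' => by
      rw [exp_add, abs_mul, abs_of_nonneg hc0]
    simp only [e]
    rw [← Finset.sum_mul]
    calc _ ≤ (2 ^ K * (1 + 0.031)) * (1 + 0.0309) :=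
          mul_le_mul h4 hexp2 (exp_pos _).le (by positivity)
      _ ≤ _ := by
          have : (0 : ℝ) < 2 ^ K := by positivity
          nlinarith
  refine (Finset.sum_le_sum fun μ _ => row μ).trans (le_of_eq ?_)
  rw [Finset.sum_const, nsmul_eq_mul, Finset.card_univ, hcard]
  ring

/-- The information cost of one episode played with policy `π`: the early and the final
occupation of `plus`, each relative to its budget. -/
def info (L : Lock S A) (π : Policy O A) : ℝ :=
  E.ecost (early H) L π * (100 * (E.ε ^ 2 * E.σ ^ 2) / Real.sqrt K) +
    E.ecost (final H) L π * (100 * E.ε ^ 2)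

lemma info_nonneg (L : Lock S A) (π : Policy O A) : 0 ≤ E.info L π := by
  have h1 := E.ecost_nonneg (early_nonneg (H := H)) L π
  have h2 := E.ecost_nonneg (final_nonneg (H := H)) L π
  unfold info
  positivity

lemma transcriptProb_eq (L : Lock S A) (hL : E.exits L.ss L.as) (hH : L.hs < H)
    (μ : Fin K → Bool) (𝔄 : Algorithm O A H) {T : ℕ} (τs : Fin T → Fin H → O × A) :
    (E.model L μ).transcriptProb 𝔄 τs =
      seqProb (fun past τ => seqProb (E.kern (𝔄.policyAt past)) τ * E.elr L μ τ) τs :=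
  Finset.prod_congr rfl fun _ _ => E.trajProb_eq L hL hH μ _ _

open Classical in
/-- For a fixed arm and password, an algorithm that succeeds on average over the hidden signs must
already guess well, or spend information, under the reference law. -/
lemma success_le (L : Lock S A) (hL : E.exits L.ss L.as) (hpos : 0 < L.hs) (hH : L.hs < H)
    (pl : ℕ → A) (hpl : E.walk pl (L.hs - 1) = L.ss) (𝔄 : Algorithm O A H) (T : ℕ)
    (hpac : ∀ μ, (3 : ℝ) / 4 ≤ (E.model L μ).pacProb 𝔄 T (E.ε / 8)) :
    (3 : ℝ) / 4 ≤ ∑ τs : Fin T → Fin H → O × A,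
      seqProb (fun past τ => seqProb (E.kern (𝔄.policyAt past)) τ) τs *
        (7 / 3 * E.ecost (final H) L (𝔄.out (List.ofFn τs)) +
          total (fun past => E.info L (𝔄.policyAt past)) (List.ofFn τs)) + 1 / 8 + 2 * 0.064 := by
  have hK := E.K_pos
  have hK' : (0 : ℝ) < K := by exact_mod_cast hK
  have hsK : 0 < Real.sqrt K := Real.sqrt_pos.mpr hK'
  have hε := E.ε_pos
  have hσ := E.σ_pos
  set p : List (Fin H → O × A) → (Fin H → O × A) → ℝ :=
    fun past τ => seqProb (E.kern (𝔄.policyAt past)) τ with hp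
  have hp0 : ∀ l x, 0 ≤ p l x := fun l x => seqProb_nonneg (E.kern_nonneg _) x
  set Good : List (Fin H → O × A) → Prop := fun past =>
    1 ≤ 7 / 3 * E.ecost (final H) L (𝔄.out past) with hGood
  have mix := mixture_le (p := p) hp0 (fun l => E.sum_ref _)
    (fun past => E.info L (𝔄.policyAt past)) (fun _ => E.info_nonneg _ _) (E.elr L)
    (fun μ τ => E.elr_nonneg L μ τ) (fun μ l => E.sum_elr L hL μ _)
    (fun μ μ' => 3 / 100 * Real.sqrt K * |corr μ μ'| + 3 / 100)
    (fun μ μ' => by positivity)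
    (fun μ μ' past => by
      refine (E.sum_elr_elr L hL μ μ' (𝔄.policyAt past)).trans ?_
      refine le_trans ?_ (Real.add_one_le_exp _)
      have h1 := E.ecost_nonneg (early_nonneg (H := H)) L (𝔄.policyAt past)
      have h2 := E.ecost_nonneg (final_nonneg (H := H)) L (𝔄.policyAt past)
      set q := E.ecost (early H) L (𝔄.policyAt past)
      set f := E.ecost (final H) L (𝔄.policyAt past)
      have e : E.info L (𝔄.policyAt past) * (3 / 100 * Real.sqrt K * |corr μ μ'| + 3 / 100) =
          3 * E.ε ^ 2 * (E.σ ^ 2 * |corr μ μ'| * q + f) +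
          (q * (100 * (E.ε ^ 2 * E.σ ^ 2) / Real.sqrt K) * (3 / 100) +
            f * (100 * E.ε ^ 2) * (3 / 100 * Real.sqrt K * |corr μ μ'|)) := by
        unfold info
        field_simp
        ring
      rw [e]
      have : 0 ≤ q * (100 * (E.ε ^ 2 * E.σ ^ 2) / Real.sqrt K) * (3 / 100) +
            f * (100 * E.ε ^ 2) * (3 / 100 * Real.sqrt K * |corr μ μ'|) := by positivity
      linarith) T Good (sum_exp_abs_corr hK) Fintype.card_pos
  have low : (Fintype.card (Fin K → Bool) : ℝ) * (3 / 4) ≤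
      ∑ μ, ∑ τs : Fin T → Fin H → O × A, seqProb (fun l x => p l x * E.elr L μ x) τs *
        (if Good (List.ofFn τs) then 1 else 0) := by
    rw [← Finset.card_univ, ← nsmul_eq_mul]
    refine Finset.card_nsmul_le_sum _ _ _ fun μ _ => (hpac μ).trans ?_
    refine Finset.sum_le_sum fun τs _ => ?_
    have nn : 0 ≤ seqProb (fun l x => p l x * E.elr L μ x) τs :=
      seqProb_nonneg (fun l x => mul_nonneg (hp0 l x) (E.elr_nonneg L μ x)) τs
    rw [E.transcriptProb_eq L hL hH]
    by_cases hacc : (E.model L μ).optValue - (E.model L μ).value (𝔄.out (List.ofFn τs)) < E.ε / 8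
    · have hg : Good (List.ofFn τs) :=
        E.ecost_of_accurate L hL hpos hH μ pl hpl _ hacc
      rw [if_pos hacc, if_pos hg, mul_one]
    · rw [if_neg hacc]
      split_ifs
      · simpa using nn
      · simp
  have hcard : (0 : ℝ) < Fintype.card (Fin K → Bool) := by exact_mod_cast Fintype.card_pos
  have h1 := le_of_mul_le_mul_left (low.trans mix) hcard
  refine h1.trans ?_
  gcongr with τs
  · exact seqProb_nonneg hp0 τs
  · have h2 := E.ecost_nonneg (final_nonneg (H := H)) L (𝔄.out (List.ofFn τs))
    split_ifs with hg
    · exact hg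
    · positivity

/-- Summing over arms and passwords: each episode has only a fixed total information to spread over
all the secrets, and so does the final guess. -/
lemma family_bound {ι : Type} [Fintype ι] [Nonempty ι] (arm : ι → ℕ × S × A)
    (hinj : Function.Injective arm)
    (hx : ∀ i, E.exits (arm i).2.1 (arm i).2.2) (hpos : ∀ i, 0 < (arm i).1)
    (b : ℕ) (hb : ∀ i, (arm i).1 ≤ b) (hbH : b < H)
    (hreach : ∀ i, ∃ pl : ℕ → A, E.walk pl ((arm i).1 - 1) = (arm i).2.1)
    (hA : 3 ≤ Fintype.card A) (𝔄 : Algorithm O A H) (T : ℕ)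
    (hpac : ∀ i (pw : Fin H → A) μ,
      (3 : ℝ) / 4 ≤ (E.model (lock (arm i) pw) μ).pacProb 𝔄 T (E.ε / 8)) :
    (3 : ℝ) / 4 * Fintype.card ι ≤
      7 / 3 * (1 / (Fintype.card A : ℝ)) ^ (H - 1 - b) +
        T * (3 / 2 * (100 * (E.ε ^ 2 * E.σ ^ 2) / Real.sqrt K) +
          (1 / (Fintype.card A : ℝ)) ^ (H - 1 - b) * (100 * E.ε ^ 2)) +
        (1 / 8 + 2 * 0.064) * Fintype.card ι := by
  have hε := E.ε_pos
  have hσ := E.σ_pos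
  have hA' : (3 : ℝ) ≤ Fintype.card A := by exact_mod_cast hA
  set r : ℝ := 1 / (Fintype.card A : ℝ) with hr
  have hr0 : 0 ≤ r := by positivity
  have hr1 : r ≤ 1 / 3 := by
    rw [hr]; exact one_div_le_one_div_of_le (by norm_num) hA'
  set R : ℝ := r ^ (H - 1 - b) with hR
  have hR0 : 0 ≤ R := by positivity
  set W : ℝ := (Fintype.card A : ℝ) ^ H with hW
  have hW0 : 0 < W := by positivity
  set N : ℝ := (Fintype.card ι : ℝ) with hN
  have cq : ∀ π : Policy O A,
      ∑ i, ∑ pw : Fin H → A, E.ecost (early H) (lock (arm i) pw) π ≤ W * (3 / 2) := fun π =>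
    E.sum_arms_ecost early_nonneg arm hinj hx (by norm_num)
      (fun i => early_sum_le hr0 hr1 _ _) π
  have cf : ∀ π : Policy O A,
      ∑ i, ∑ pw : Fin H → A, E.ecost (final H) (lock (arm i) pw) π ≤ W * R := fun π =>
    E.sum_arms_ecost final_nonneg arm hinj hx hR0
      (fun i => final_sum_le hr0 (by linarith) _ _ _ (hb i)) π
  set c₁ : ℝ := 100 * (E.ε ^ 2 * E.σ ^ 2) / Real.sqrt K with hc₁
  set c₂ : ℝ := 100 * E.ε ^ 2 with hc₂
  have hc₁0 : 0 ≤ c₁ := by positivity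
  have hc₂0 : 0 ≤ c₂ := by positivity
  have ci : ∀ π : Policy O A,
      ∑ i, ∑ pw : Fin H → A, E.info (lock (arm i) pw) π ≤ W * (3 / 2 * c₁ + R * c₂) := by
    intro π
    have e : ∑ i, ∑ pw : Fin H → A, E.info (lock (arm i) pw) π =
        (∑ i, ∑ pw : Fin H → A, E.ecost (early H) (lock (arm i) pw) π) * c₁ +
        (∑ i, ∑ pw : Fin H → A, E.ecost (final H) (lock (arm i) pw) π) * c₂ := by
      simp only [info, Finset.sum_add_distrib, ← Finset.sum_mul, ← hc₁, ← hc₂]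
    rw [e]
    have h1 := mul_le_mul_of_nonneg_right (cq π) hc₁0
    have h2 := mul_le_mul_of_nonneg_right (cf π) hc₂0
    linarith
  have each : ∀ i (pw : Fin H → A), (3 : ℝ) / 4 ≤ _ := fun i pw => by
    obtain ⟨pl, hpl⟩ := hreach i
    exact E.success_le (lock (arm i) pw) (hx i) (hpos i) (lt_of_le_of_lt (hb i) hbH) pl hpl 𝔄 T
      (hpac i pw)
  set p : List (Fin H → O × A) → (Fin H → O × A) → ℝ :=
    fun past τ => seqProb (E.kern (𝔄.policyAt past)) τ with hp
  have hp0 : ∀ l x, 0 ≤ p l x := fun l x => seqProb_nonneg (E.kern_nonneg _) x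
  have hp1 : ∑ τs : Fin T → Fin H → O × A, seqProb p τs = 1 :=
    sum_seqProb_eq_one hp0 T fun l => E.sum_ref _
  have tot : ∀ τs : Fin T → Fin H → O × A, ∑ i, ∑ pw : Fin H → A,
      (7 / 3 * E.ecost (final H) (lock (arm i) pw) (𝔄.out (List.ofFn τs)) +
        total (fun past => E.info (lock (arm i) pw) (𝔄.policyAt past)) (List.ofFn τs)) ≤
      W * (7 / 3 * R + T * (3 / 2 * c₁ + R * c₂)) := by
    intro τs
    simp only [Finset.sum_add_distrib, ← Finset.mul_sum]
    have h1 := cf (𝔄.out (List.ofFn τs))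
    have h2 : ∑ i, ∑ pw : Fin H → A,
        total (fun past => E.info (lock (arm i) pw) (𝔄.policyAt past)) (List.ofFn τs) ≤
        T * (W * (3 / 2 * c₁ + R * c₂)) := by
      simp only [total, acc_add_ofFn
        (fun past (_ : Fin H → O × A) => E.info (lock _ _) (𝔄.policyAt past))]
      calc _ = ∑ t : Fin T, ∑ i, ∑ pw : Fin H → A,
            E.info (lock (arm i) pw) (𝔄.policyAt ((List.ofFn τs).take t.1)) := by
            conv_rhs => rw [Finset.sum_comm]
            exact Finset.sum_congr rfl fun i _ => Finset.sum_comm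
        _ ≤ ∑ _t : Fin T, W * (3 / 2 * c₁ + R * c₂) := Finset.sum_le_sum fun t _ => ci _
        _ = _ := by simp
    linarith
  have split : ∀ G : ι → (Fin H → A) → ℝ, ∑ i, ∑ pw, (G i pw + 1 / 8 + 2 * 0.064) =
      ∑ i, ∑ pw, G i pw + N * W * (1 / 8 + 2 * 0.064) := by
    intro G
    simp only [add_assoc (G _ _), Finset.sum_add_distrib (g := fun _ => (1 / 8 + 2 * 0.064 : ℝ))]
    simp only [Finset.sum_add_distrib, Finset.sum_const, Finset.card_univ, nsmul_eq_mul,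
      Fintype.card_fun, Fintype.card_fin, Nat.cast_pow, ← hN, ← hW]
    ring
  have main : N * W * (3 / 4) ≤
      W * (7 / 3 * R + T * (3 / 2 * c₁ + R * c₂)) + N * W * (1 / 8 + 2 * 0.064) := by
    calc N * W * (3 / 4) = ∑ _i : ι, ∑ _pw : Fin H → A, (3 : ℝ) / 4 := by
          simp [hN, hW]; ring
      _ ≤ _ := Finset.sum_le_sum fun i _ => Finset.sum_le_sum fun pw _ => each i pw
      _ = ∑ τs : Fin T → Fin H → O × A, seqProb p τs * (∑ i, ∑ pw : Fin H → A,
          (7 / 3 * E.ecost (final H) (lock (arm i) pw) (𝔄.out (List.ofFn τs)) +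
            total (fun past => E.info (lock (arm i) pw) (𝔄.policyAt past)) (List.ofFn τs))) +
          N * W * (1 / 8 + 2 * 0.064) := by
          rw [split]
          congr 1
          simp only [Finset.mul_sum]
          conv_rhs => rw [Finset.sum_comm]
          exact Finset.sum_congr rfl fun i _ => Finset.sum_comm
      _ ≤ _ := by
          gcongr
          calc _ ≤ ∑ τs : Fin T → Fin H → O × A,
                seqProb p τs * (W * (7 / 3 * R + T * (3 / 2 * c₁ + R * c₂))) :=
                Finset.sum_le_sum fun τs _ =>
                  mul_le_mul_of_nonneg_left (tot τs) (seqProb_nonneg hp0 τs)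
            _ = _ := by rw [← Finset.sum_mul, hp1, one_mul]
  have main' : W * (3 / 4 * N) ≤
      W * (7 / 3 * R + T * (3 / 2 * c₁ + R * c₂) + (1 / 8 + 2 * 0.064) * N) := by linarith
  exact le_of_mul_le_mul_left main' hW0

end Env

end Model

/-! ### The binary tree instances -/

/-- One step of the tree dynamics on heap indices.  Node `0` is `minus`, the tree nodes are
`1, …, 2 ^ n - 1` with root `1` and children `2 v`, `2 v + 1`, and `2 ^ n` is `plus`.  Action `0`
waits, the other actions descend, and at a leaf they leave the tree. -/
def treeStep (n v a : ℕ) : ℕ :=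
  if v = 0 then 0
  else if v < 2 ^ (n - 1) then (if a = 0 then v else if a = 1 then 2 * v else 2 * v + 1)
  else if v < 2 ^ n ∧ a = 0 then v else 0

lemma two_pow_pred {n : ℕ} (hn : 1 ≤ n) : 2 ^ n = 2 * 2 ^ (n - 1) := by
  rw [← pow_succ', Nat.sub_add_cancel hn]

lemma treeStep_lt {n : ℕ} (hn : 1 ≤ n) (v a : ℕ) : treeStep n v a < 2 ^ n := by
  have h1 := two_pow_pred hn
  have h2 : 0 < 2 ^ (n - 1) := by positivity
  unfold treeStep
  split_ifs <;> omega

/-- The growth condition: `(1 + σ) ^ (2 H) ≤ e` when `σ ≤ 1 / (2 H)`. -/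
lemma growth_of_le {σ : ℝ} {H : ℕ} (hσ : 0 < σ) (hσ' : σ ≤ 1 / (2 * H)) (hH : 0 < H) :
    (1 + σ) ^ (2 * H) ≤ 3 := by
  have hH' : (0 : ℝ) < H := by exact_mod_cast hH
  have h1 : 1 + σ ≤ Real.exp σ := by linarith [Real.add_one_le_exp σ]
  have h2 : ((2 * H : ℕ) : ℝ) * σ ≤ 1 := by
    rw [le_div_iff₀ (by positivity)] at hσ'
    push_cast; linarith
  calc (1 + σ) ^ (2 * H) ≤ Real.exp σ ^ (2 * H) := pow_le_pow_left₀ (by linarith) h1 _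
    _ = Real.exp ((2 * H : ℕ) * σ) := by rw [← Real.exp_nat_mul]
    _ ≤ Real.exp 1 := Real.exp_le_exp.mpr h2
    _ ≤ 3 := by linarith [Real.exp_one_lt_d9]

/-- The environment on a binary tree of depth `n - 1`. -/
def treeEnv (ε σ : ℝ) (n K A H : ℕ) (hε : 0 < ε) (hε' : ε ≤ 0.1) (hσ : 0 < σ)
    (hσ' : σ ≤ 1 / (2 * H)) (hn : 1 ≤ n) (hK : 1 ≤ K) (hH : 4 * n ≤ H) :
    Env (Fin (2 ^ n + 1)) (Fin (2 ^ n + 2 * K + 1)) (Fin A) K H where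
  plus := ⟨2 ^ n, by omega⟩
  minus := ⟨0, Nat.succ_pos _⟩
  root := ⟨1, by have : 0 < 2 ^ n := by positivity
                 omega⟩
  move s a := ⟨treeStep n s a, (treeStep_lt hn _ _).trans (by omega)⟩
  exits s a := 2 ^ (n - 1) ≤ s.1 ∧ s.1 < 2 ^ n ∧ a.1 ≠ 0
  obs := Fintype.equivOfCardEq (by simp; ring)
  σ := σ
  ε := ε
  plus_ne_minus := by simp
  root_ne_plus := by
    have := Nat.one_lt_two_pow (n := n) (by omega)
    simp only [ne_eq, Fin.mk.injEq]
    omega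
  move_ne_plus s a := by
    have := treeStep_lt hn s.1 a.1
    simp only [ne_eq, Fin.mk.injEq]
    omega
  move_minus a := by simp [treeStep]
  move_exits s a h := by
    have : 0 < 2 ^ (n - 1) := by positivity
    simp only [Fin.mk.injEq, treeStep]
    split_ifs <;> omega
  not_exits_minus a := by
    have : 0 < 2 ^ (n - 1) := by positivity
    simp
  not_exits_plus a := by simp
  σ_pos := hσ
  σ_le := by
    have hH' : (4 : ℝ) ≤ H := by exact_mod_cast (by omega : 4 ≤ H)
    refine hσ'.trans ?_
    rw [div_le_one (by positivity)]
    linarith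
  growth := growth_of_le hσ hσ' (by omega)
  ε_pos := hε
  ε_le := hε'.trans (by norm_num)
  K_pos := hK

/-- A plan descending to leaf `s` along its binary expansion and then waiting there. -/
def treePlan (n A : ℕ) (hA : 3 ≤ A) (s : ℕ) (t : ℕ) : Fin A :=
  if t ≤ n - 1 then
    if s / 2 ^ (n - 1 - t) % 2 = 0 then ⟨1, by omega⟩ else ⟨2, by omega⟩
  else ⟨0, by omega⟩

lemma walk_treePlan (ε σ : ℝ) (n K A H : ℕ) (hε : 0 < ε) (hε' : ε ≤ 0.1) (hσ : 0 < σ)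
    (hσ' : σ ≤ 1 / (2 * H)) (hn : 1 ≤ n) (hK : 1 ≤ K) (hH : 4 * n ≤ H) (hA : 3 ≤ A)
    {s : ℕ} (h1 : 2 ^ (n - 1) ≤ s) (h2 : s < 2 ^ n) (t : ℕ) :
    ((treeEnv ε σ n K A H hε hε' hσ hσ' hn hK hH).walk (treePlan n A hA s) t).1 =
      s / 2 ^ (n - 1 - t) := by
  have hp := two_pow_pred hn
  have hp0 : 0 < 2 ^ (n - 1) := by positivity
  induction t with
  | zero =>
    show 1 = _
    symm
    rw [Nat.sub_zero]
    exact Nat.div_eq_of_lt_le (by omega) (by omega)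
  | succ t ih =>
    show treeStep n _ _ = _
    rw [ih]
    by_cases ht : t + 1 ≤ n - 1
    · have e : 2 ^ (n - 1 - t) = 2 ^ (n - 1 - (t + 1)) * 2 := by
        rw [← pow_succ]; congr 1; omega
      rw [e, ← Nat.div_div_eq_div_mul]
      have hle : 2 ^ (n - 1 - (t + 1)) * 2 ≤ 2 ^ (n - 1) := by
        rw [← e]; exact Nat.pow_le_pow_right (by norm_num) (by omega)
      set q := 2 ^ (n - 1 - (t + 1)) with hq
      have hq0 : 0 < q := by positivity
      have h3 : 2 ≤ s / q := by rw [Nat.le_div_iff_mul_le hq0]; omega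
      have h4 : s / q < 2 ^ n := lt_of_le_of_lt (Nat.div_le_self _ _) h2
      unfold treeStep treePlan
      rw [if_neg (by omega), if_pos (by omega), if_pos ht, ← hq]
      split_ifs <;> simp_all <;> omega
    · have e : n - 1 - (t + 1) = 0 := by omega
      have e' : n - 1 - t = 0 := by omega
      unfold treeStep treePlan
      rw [e, e', pow_zero, Nat.div_one, if_neg (by omega), if_neg (by omega), if_neg ht,
        if_pos ⟨h2, rfl⟩]

/-- The arms of the family: a step in `[n, H / 2]`, a leaf, and a nonzero action. -/
abbrev ArmIndex (n A H : ℕ) : Type := Fin (H / 2 - n + 1) × Fin (2 ^ (n - 1)) × Fin (A - 1)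

/-- The step, leaf and action named by an arm index. -/
def treeArm (n A H : ℕ) (hn : 1 ≤ n) (i : ArmIndex n A H) : ℕ × Fin (2 ^ n + 1) × Fin A :=
  (n + i.1, ⟨2 ^ (n - 1) + i.2.1, by have := two_pow_pred hn; omega⟩, ⟨i.2.2 + 1, by omega⟩)

lemma treeArm_injective (n A H : ℕ) (hn : 1 ≤ n) : Function.Injective (treeArm n A H hn) := by
  rintro ⟨i, j, k⟩ ⟨i', j', k'⟩ h
  simp only [treeArm, Prod.mk.injEq, Fin.mk.injEq] at h
  simp only [Prod.mk.injEq, Fin.ext_iff]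
  omega

/-! ### Arithmetic of the lower bound -/

lemma card_arms_ge {n A H : ℕ} (hA : 3 ≤ A) (hH : 4 * n ≤ H) :
    (2 : ℝ) ^ (n - 1) * A * H / 6 ≤ Fintype.card (ArmIndex n A H) := by
  have h1 : H ≤ 4 * (H / 2 - n + 1) := by omega
  have h2 : 2 * A ≤ 3 * (A - 1) := by omega
  have h3 : 2 ^ (n - 1) * A * H ≤ 6 * Fintype.card (ArmIndex n A H) := by
    have := Nat.mul_le_mul (Nat.mul_le_mul h1 h2) (le_refl (2 ^ (n - 1)))
    simp only [Fintype.card_prod, Fintype.card_fin]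
    nlinarith
  have h4 : (2 : ℝ) ^ (n - 1) * A * H ≤ 6 * (Fintype.card (ArmIndex n A H) : ℝ) := by
    exact_mod_cast h3
  linarith

lemma card_arms_le {n A H : ℕ} (hn : 1 ≤ n) (hH : 4 * n ≤ H) :
    Fintype.card (ArmIndex n A H) ≤ (2 ^ n + 1) * A * H := by
  have h1 : H / 2 - n + 1 ≤ H := by omega
  have h2 : A - 1 ≤ A := by omega
  have h3 : 2 ^ (n - 1) ≤ 2 ^ n + 1 := by have := two_pow_pred hn; omega
  have := Nat.mul_le_mul (Nat.mul_le_mul h3 h2) h1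
  simp only [Fintype.card_prod, Fintype.card_fin]
  linarith [this, mul_comm (H / 2 - n + 1) (2 ^ (n - 1) * (A - 1))]

/-- The probability of guessing `H - 1 - H / 2` password letters is at most `A ^ (1 - H / 2)`, where
the first quotient is rounded and the second is not. -/
lemma guess_le {A H : ℕ} (hA : 3 ≤ A) :
    (1 / (A : ℝ)) ^ (H - 1 - H / 2) * (A : ℝ) ^ ((H : ℝ) / 2) ≤ A := by
  have hA' : (3 : ℝ) ≤ A := by exact_mod_cast hA
  have hA0 : (0 : ℝ) < A := by linarith
  rw [one_div, inv_pow, ← Real.rpow_natCast, ← Real.rpow_neg hA0.le, ← Real.rpow_add hA0]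
  conv_rhs => rw [← Real.rpow_one (A : ℝ)]
  refine Real.rpow_le_rpow_of_exponent_le (by linarith) ?_
  have : (H : ℝ) ≤ 2 * ((H - 1 - H / 2 : ℕ) : ℝ) + 2 := by
    exact_mod_cast (by omega : H ≤ 2 * (H - 1 - H / 2) + 2)
  linarith

/-- The counting inequality forces `T` to be large. -/
lemma bound_of_counting {ε σ : ℝ} {n K A H T : ℕ} {N R : ℝ} (hε : 0 < ε) (hσ : 0 < σ)
    (hK : 1 ≤ K) (hA : 3 ≤ A) (hH : 4 ≤ H) (hN : (2 : ℝ) ^ (n - 1) * A * H / 6 ≤ N)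
    (hR0 : 0 ≤ R) (hR : R * (A : ℝ) ^ ((H : ℝ) / 2) ≤ A)
    (hmain : 3 / 4 * N ≤ 7 / 3 * R + T * (3 / 2 * (100 * (ε ^ 2 * σ ^ 2) / Real.sqrt K) +
      R * (100 * ε ^ 2)) + (1 / 8 + 2 * 0.064) * N) :
    (1 / 20000 : ℝ) *
        min ((2 : ℝ) ^ (n - 1) * Real.sqrt K * A * H / (σ ^ 2 * ε ^ 2))
          ((2 : ℝ) ^ (n - 1) * (A : ℝ) ^ ((H : ℝ) / 2) * H / ε ^ 2) ≤ (T : ℝ) := by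
  by_contra! hT
  have hA' : (3 : ℝ) ≤ A := by exact_mod_cast hA
  have hA0 : (0 : ℝ) < A := by linarith
  have hH' : (4 : ℝ) ≤ H := by exact_mod_cast hH
  have hK' : (0 : ℝ) < K := by exact_mod_cast hK
  have hs : 0 < Real.sqrt K := Real.sqrt_pos.mpr hK'
  have hP : (1 : ℝ) ≤ 2 ^ (n - 1) := one_le_pow₀ (by norm_num)
  set P : ℝ := 2 ^ (n - 1)
  set s := Real.sqrt K
  have hQ : (9 : ℝ) ≤ (A : ℝ) ^ ((H : ℝ) / 2) := by
    calc (9 : ℝ) = 3 ^ (2 : ℝ) := by norm_num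
      _ ≤ (A : ℝ) ^ (2 : ℝ) := Real.rpow_le_rpow (by norm_num) hA' (by norm_num)
      _ ≤ _ := Real.rpow_le_rpow_of_exponent_le (by linarith) (by linarith)
  set Q : ℝ := (A : ℝ) ^ ((H : ℝ) / 2)
  set X : ℝ := P * A * H with hX
  have hX0 : 0 < X := by positivity
  have h1 : (T : ℝ) * (ε ^ 2 * σ ^ 2 / s) ≤ X / 20000 := by
    have h := hT.le.trans (mul_le_mul_of_nonneg_left (min_le_left _ _) (by norm_num))
    have := mul_le_mul_of_nonneg_right h (show 0 ≤ ε ^ 2 * σ ^ 2 / s by positivity)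
    refine this.trans (le_of_eq ?_)
    rw [hX]; field_simp
  have h2 : (T : ℝ) * (R * ε ^ 2) ≤ X / 20000 := by
    have h := hT.le.trans (mul_le_mul_of_nonneg_left (min_le_right _ _) (by norm_num))
    have h3 := mul_le_mul_of_nonneg_right h (show 0 ≤ R * ε ^ 2 by positivity)
    have e : 1 / 20000 * (P * Q * H / ε ^ 2) * (R * ε ^ 2) = 1 / 20000 * (P * H) * (R * Q) := by
      field_simp
    rw [e] at h3
    have h4 := mul_le_mul_of_nonneg_left hR (show 0 ≤ 1 / 20000 * (P * H) by positivity)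
    refine (h3.trans h4).trans (le_of_eq ?_)
    rw [hX]; ring
  have h3 : R ≤ X / 36 := by
    have h5 : R * 9 ≤ A := (mul_le_mul_of_nonneg_left hQ hR0).trans hR
    have h6 : 1 * A * 4 ≤ X := by rw [hX]; gcongr
    linarith
  have e : (T : ℝ) * (3 / 2 * (100 * (ε ^ 2 * σ ^ 2) / s) + R * (100 * ε ^ 2)) =
      150 * (T * (ε ^ 2 * σ ^ 2 / s)) + 100 * (T * (R * ε ^ 2)) := by ring
  rw [e] at hmain
  linarith

end HardFamily

/-- **Proposition D.1 (hard instance family for single-step revealing POMDPs).**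
For every `ε ∈ (0,0.1]`, `σ ∈ (0,1/(2H)]`, `n ≥ 1`, `K ≥ 1`, `A ≥ 3`, `H ≥ 4n`, there is a
finite family `ℳ` of POMDPs with `|𝒮| = 2ⁿ+1`, `|𝒪| = 2ⁿ+2K+1`, `|𝒜| = A`, each
single-step `α`-revealing with `α = σ/(σ+2)` (i.e. `1/α = 1 + 2/σ`), with
`|ℳ| ≤ 2^K·A^H·(2ⁿ+1)·A·H`, such that any `T`-episode algorithm that is `(ε/8)`-accurate
with probability `≥ 3/4` on all of `ℳ` must satisfy
`T ≥ (1/20000)·min{ 2^{n−1}·√K·A·H/(σ²ε²), 2^{n−1}·A^{H/2}·H/ε² }`. -/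
theorem one_step_hard_family (ε σ : ℝ) (n K A H : ℕ)
    (hε : 0 < ε) (hε' : ε ≤ 0.1) (hσ : 0 < σ) (hσ' : σ ≤ 1 / (2 * H))
    (hn : 1 ≤ n) (hK : 1 ≤ K) (hA : 3 ≤ A) (hH : 4 * n ≤ H) :
    ∃ ℳ : Set (POMDP (Fin (2 ^ n + 1)) (Fin (2 ^ n + 2 * K + 1)) (Fin A) H),
      ℳ.Finite ∧
      (∀ M ∈ ℳ, M.IsRevealing 1 (σ / (σ + 2))) ∧
      Nat.card ℳ ≤ 2 ^ K * A ^ H * (2 ^ n + 1) * A * H ∧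
      ∀ (T : ℕ) (𝔄 : Algorithm (Fin (2 ^ n + 2 * K + 1)) (Fin A) H),
        (∀ M ∈ ℳ, (3 : ℝ) / 4 ≤ M.pacProb 𝔄 T (ε / 8)) →
        (1 / 20000 : ℝ) *
            min ((2 : ℝ) ^ (n - 1) * Real.sqrt K * A * H / (σ ^ 2 * ε ^ 2))
              ((2 : ℝ) ^ (n - 1) * (A : ℝ) ^ ((H : ℝ) / 2) * H / ε ^ 2) ≤ (T : ℝ) := by
  set E := HardFamily.treeEnv ε σ n K A H hε hε' hσ hσ' hn hK hH with hE
  have hx : ∀ i, E.exits (HardFamily.treeArm n A H hn i).2.1 (HardFamily.treeArm n A H hn i).2.2 := by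
    intro i
    have := HardFamily.two_pow_pred hn
    refine ⟨Nat.le_add_right _ _, ?_, Nat.succ_ne_zero _⟩
    show 2 ^ (n - 1) + i.2.1.1 < 2 ^ n
    omega
  let f : HardFamily.ArmIndex n A H × (Fin H → Fin A) × (Fin K → Bool) →
      POMDP (Fin (2 ^ n + 1)) (Fin (2 ^ n + 2 * K + 1)) (Fin A) H := fun x =>
    E.model (HardFamily.Env.lock (HardFamily.treeArm n A H hn x.1) x.2.1) x.2.2
  refine ⟨Set.range f, Set.finite_range f, ?_, ?_, ?_⟩
  · rintro _ ⟨x, rfl⟩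
    exact E.revealing _ _
  · calc Nat.card (Set.range f)
        ≤ Nat.card (HardFamily.ArmIndex n A H × (Fin H → Fin A) × (Fin K → Bool)) :=
          Finite.card_range_le f
      _ = 2 ^ K * A ^ H * Fintype.card (HardFamily.ArmIndex n A H) := by
          rw [Nat.card_eq_fintype_card]
          simp only [Fintype.card_prod, Fintype.card_fun, Fintype.card_fin, Fintype.card_bool]
          ring
      _ ≤ 2 ^ K * A ^ H * ((2 ^ n + 1) * A * H) :=
          Nat.mul_le_mul_left _ (HardFamily.card_arms_le hn hH)
      _ = _ := by ring
  · intro T 𝔄 hpac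
    have : Nonempty (HardFamily.ArmIndex n A H) :=
      ⟨⟨0, by omega⟩, ⟨0, by positivity⟩, ⟨0, by omega⟩⟩
    have key := E.family_bound (HardFamily.treeArm n A H hn)
      (HardFamily.treeArm_injective n A H hn) hx
      (fun i => by show 0 < n + i.1.1; omega) (H / 2)
      (fun i => by show n + i.1.1 ≤ H / 2; omega) (by omega)
      (fun i => by
        obtain ⟨h1, h2, -⟩ := hx i
        refine ⟨HardFamily.treePlan n A hA (HardFamily.treeArm n A H hn i).2.1, Fin.ext ?_⟩
        rw [hE, HardFamily.walk_treePlan ε σ n K A H hε hε' hσ hσ' hn hK hH hA h1 h2]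
        -- the pull happens at a step `≥ n`, after the descent is complete
        have e : n - 1 - ((HardFamily.treeArm n A H hn i).1 - 1) = 0 := by
          show n - 1 - (n + i.1.1 - 1) = 0
          omega
        rw [e, pow_zero, Nat.div_one])
      (by simpa using hA) 𝔄 T
      (fun i pw μ => hpac _ ⟨(i, pw, μ), rfl⟩)
    rw [Fintype.card_fin] at key
    exact HardFamily.bound_of_counting hε hσ hK hA (by omega) (HardFamily.card_arms_ge hA hH)
      (by positivity) (HardFamily.guess_le hA) key
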